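/- arXiv:2412.14016 — 2 statements merged into one kernel-verified Lean document; each statement's English description precedes it below -/
import Mathlib

section
/- Let 1 ≤ p < 2 and let {X_{m,n} : m ≥ 1, n ≥ 1} be a double array of random variables satisfying Condition (H_2). For n ≥ 1, i ≥ 1, j ≥ 1 set b_n = n^{1/p} and Z_{n,i,j} = X_{i,j} · 1(|X_{i,j}| ≤ b_n). If {X_{m,n}} is stochastically dominated by a random variable X satisfying n · P(|X| > n^{1/p}) → 0 as n → ∞, then max_{u≤m, v≤n} |∑_{i=1}^{u} ∑_{j=1}^{v} (X_{i,j} − E Z_{mn,i,j})| / (mn)^{1/p} → 0 in probability as max(m, n) → ∞. -/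
/-!
The partial sums over all rectangles `[1, u] × [1, v]` are controlled by a dyadic chaining in both
coordinates in which the truncation level depends on the scale; no maximal inequality is assumed
for the array, only the variance bound of Condition `(H_2)`.

Put `b = (m n) ^ (1 / p)` and enclose `[1, m] × [1, n]` in a `2 ^ s × 2 ^ t` rectangle with
`2 ^ (s + t) ≤ 4 m n`. Split `X = X⁺ - X⁻` and truncate each part at the levels `b / 2 ^ r`. These
truncations are monotone functions of `X` (up to a sign), so `(H_2)` applies at every level. A block
of size `2 ^ k × 2 ^ l` is measured at level `r = (s - k) + (t - l)`. Two costs arise.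

* Full blocks. By `(H_2)` and the truncated second moment (`variance_bound`, `second_moment_le`),
  the squared block sums at level `r`, added over all blocks of the given size, have mean at most
  `(γ b σ ^ r) ^ 2` for some `σ < 1`; the decay comes from an exponent `p' < 2` in the tail bound.
  Hence the maximal block sum has mean at most `γ b σ ^ r` (`block_mean`).
* Changes of level. The difference of two consecutive truncations is nonnegative, so after centering
  each term is bounded below by minus its mean. A partial sum of such terms is at most the full
  block sum in absolute value plus the total drift (`abs_sum_subset_le`), and the full block sum is
  of the first kind. The drift is `O(γ b σ ^ r)` by the tail bound (`tail_bound`).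

Both costs are summable in `k` and `l`. Chaining in the first coordinate (`strip_mean`) and then in
the second (`rectangle_mean`) gives a majorant of all one-sided partial sums with mean
`O(γ b)`, where `γ` can be taken as small as desired because `η` in `tail_bound` is arbitrary
(`one_sided_mean`).

Finally, outside an event of probability at most `m n P(|X| > b) ≤ η` the variables coincide with
their truncations at `b`, and replacing the centering by `E X 1(|X| ≤ b)` costs at most
`m n b P(|X| > b) ≤ η b` (`partial_sum_le`); Markov's inequality concludes (`prob_le`).
-/

open MeasureTheory ProbabilityTheory Finset Filter
open scoped NNReal ENNReal

noncomputable section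

/-- `rlog x` is the natural logarithm of `max x 2`. -/
def rlog (x : ℝ) : ℝ := Real.log (max x 2)

/-- `itlog k x` is the `k`-fold iterate of `rlog` applied to `x`. -/
def itlog : ℕ → ℝ → ℝ
  | 0, x => x
  | k + 1, x => rlog (itlog k x)

/-- `logNu2 ν x = (log x)(log log x) ⋯ (log ⋯ log x)²`, the product of the first `ν`
iterated logarithms of `x`, with the last (`ν`-fold iterated) factor squared. -/
def logNu2 (ν : ℕ) (x : ℝ) : ℝ := (∏ k ∈ Finset.Icc 1 ν, itlog k x) * itlog ν x

/-- The maximum of the (nonnegative) values `g i j` over `1 ≤ i ≤ M`, `1 ≤ j ≤ N`. -/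
def maxNN (M N : ℕ) (g : ℕ → ℕ → ℝ) : ℝ :=
  (((Finset.Icc 1 M ×ˢ Finset.Icc 1 N).sup fun p => Real.toNNReal (g p.1 p.2) : ℝ≥0) : ℝ)

/-- `maxDS f m n = max_{1 ≤ u ≤ m, 1 ≤ v ≤ n} |∑_{i=1}^{u} ∑_{j=1}^{v} f i j|`. -/
def maxDS (f : ℕ → ℕ → ℝ) (m n : ℕ) : ℝ :=
  maxNN m n fun u v => |∑ i ∈ Finset.Icc 1 u, ∑ j ∈ Finset.Icc 1 v, f i j|

/-- Index set of a doubly-indexed array: pairs of indices that are both at least `1`. -/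
abbrev PIdx : Type := {k : ℕ × ℕ // 1 ≤ k.1 ∧ 1 ≤ k.2}

/-- Condition (H_{2q}) with a given constant `C`: for every finite subfamily and every
family of nondecreasing functions (whose relevant expectations are finite),
`E|∑ (f_λ(X_λ) - E f_λ(X_λ))|^{2q}
   ≤ C (|I| max E|f_λ(X_λ)|^{2q} + |I|^q max (E f_λ(X_λ)²)^q)`. -/
def CondHWith {Ω : Type*} [MeasureSpace Ω] {Λ : Type*} (q C : ℝ) (X : Λ → Ω → ℝ) : Prop :=
  ∀ (I : Finset Λ) (hI : I.Nonempty) (f : Λ → ℝ → ℝ),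
    (∀ l ∈ I, Monotone (f l)) →
    (∀ l ∈ I, Integrable fun ω => f l (X l ω)) →
    (∀ l ∈ I, Integrable fun ω => (f l (X l ω)) ^ 2) →
    (∀ l ∈ I, Integrable fun ω => |f l (X l ω)| ^ (2 * q)) →
    (Integrable fun ω => |∑ l ∈ I, (f l (X l ω) - ∫ ω', f l (X l ω'))| ^ (2 * q)) →
    ∫ ω, |∑ l ∈ I, (f l (X l ω) - ∫ ω', f l (X l ω'))| ^ (2 * q) ≤
      C * ((I.card : ℝ) * I.sup' hI (fun l => ∫ ω, |f l (X l ω)| ^ (2 * q)) +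
           (I.card : ℝ) ^ q * I.sup' hI fun l => (∫ ω, (f l (X l ω)) ^ 2) ^ q)

/-- Condition (H_{2q}): there is a finite constant for which `CondHWith` holds. -/
def CondH {Ω : Type*} [MeasureSpace Ω] {Λ : Type*} (q : ℝ) (X : Λ → Ω → ℝ) : Prop :=
  ∃ C : ℝ, CondHWith q C X

/-- The family `X` is stochastically dominated by the random variable `Y`:
`sup_λ P(|X_λ| > x) ≤ P(|Y| > x)` for every real `x`. -/
def StochDom {Ω : Type*} [MeasureSpace Ω] {Λ : Type*} (X : Λ → Ω → ℝ) (Y : Ω → ℝ) : Prop :=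
  ∀ x : ℝ, ∀ l : Λ, volume {ω | x < |X l ω|} ≤ volume {ω | x < |Y ω|}

/-- Uniform integrability: `sup_λ E(|Y_λ| 1(|Y_λ| > a)) → 0` as `a → ∞`. -/
def UnifInt {Ω : Type*} [MeasureSpace Ω] {Λ : Type*} (Y : Λ → Ω → ℝ) : Prop :=
  (∀ l, Integrable (Y l)) ∧
  ∀ ε : ℝ, 0 < ε → ∃ a : ℝ, ∀ l, ∫ ω, (if a < |Y l ω| then |Y l ω| else 0) ≤ ε

/-- A slowly varying function: positive and measurable on `[0,∞)` with
`L(cx)/L(x) → 1` as `x → ∞` for every `c > 0`. -/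
def SlowlyVarying (L : ℝ → ℝ) : Prop :=
  Measurable L ∧ (∀ x : ℝ, 0 ≤ x → 0 < L x) ∧
  ∀ c : ℝ, 0 < c → Tendsto (fun x => L (c * x) / L x) atTop (nhds 1)

/-- `Lt` is a de Bruijn conjugate of `L`. -/
def DeBruijnConjugate (L Lt : ℝ → ℝ) : Prop :=
  SlowlyVarying Lt ∧
  Tendsto (fun x => L x * Lt (x * L x)) atTop (nhds 1) ∧
  Tendsto (fun x => Lt x * L (x * Lt x)) atTop (nhds 1)

/-- Truncation from above at level `b (2^s)`:
`X_{i,j} 1(X_{i,j} ≤ b_{2^s}) + b_{2^s} 1(X_{i,j} > b_{2^s})`. -/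
def truncUp {Ω : Type*} (X : ℕ → ℕ → Ω → ℝ) (b : ℕ → ℝ) (s i j : ℕ) (ω : Ω) : ℝ :=
  if X i j ω ≤ b (2 ^ s) then X i j ω else b (2 ^ s)

/-- Two-sided truncation at level `b (2^s)`:
`-b_{2^s} 1(X < -b_{2^s}) + X 1(|X| ≤ b_{2^s}) + b_{2^s} 1(X > b_{2^s})`. -/
def truncTwo {Ω : Type*} (X : ℕ → ℕ → Ω → ℝ) (b : ℕ → ℝ) (s i j : ℕ) (ω : Ω) : ℝ :=
  if X i j ω < -b (2 ^ s) then -b (2 ^ s)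
  else if b (2 ^ s) < X i j ω then b (2 ^ s) else X i j ω

/-! ### Dyadic chaining -/

/-- Comparison of a partial sum with the full sum when every term is at least `-κ`. Applied to
centred differences of two consecutive truncations, which are bounded below by minus their means,
it replaces a maximum over partial sums by a single full sum. -/
lemma abs_sum_subset_le {ι : Type*} {I' I : Finset ι} (hI : I' ⊆ I) (y : ι → ℝ) {κ : ℝ}
    (hκ : 0 ≤ κ) (hy : ∀ i ∈ I, -κ ≤ y i) :
    |∑ i ∈ I', y i| ≤ |∑ i ∈ I, y i| + I.card * κ := by
  classical
  have key : ∀ J ⊆ I, -((I.card : ℝ) * κ) ≤ ∑ i ∈ J, y i := by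
    intro J hJ
    have h1 : J.card • (-κ) ≤ ∑ i ∈ J, y i :=
      Finset.card_nsmul_le_sum _ _ _ fun i hi => hy i (hJ hi)
    have h2 : (J.card : ℝ) ≤ I.card := by exact_mod_cast Finset.card_le_card hJ
    rw [nsmul_eq_mul] at h1
    nlinarith
  have h1 := key I' hI
  have h2 := key (I \ I') Finset.sdiff_subset
  have h3 := Finset.sum_sdiff (f := y) hI
  have h4 := le_abs_self (∑ i ∈ I, y i)
  have h5 := abs_nonneg (∑ i ∈ I, y i)
  rw [abs_le]
  constructor <;> linarith

/-- Deterministic chaining along the dyadic expansion of `u`. A partial sum over an initial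
piece of a block of length `2 ^ (k + 1)` is, after replacing `h (k + 1)` by `h k` (cost `N k`), at
most one full half-block (cost `M k`) plus a partial sum over an initial piece of a block of length
`2 ^ k`. Smaller blocks are thus measured with smaller `k`, that is, with stronger truncation. -/
lemma chaining_pointwise (h : ℕ → ℕ → ℝ) (M N : ℕ → ℝ) (s : ℕ)
    (hM : ∀ k ≤ s, ∀ a < 2 ^ (s - k),
      |∑ i ∈ Finset.Ico (2 ^ k * a) (2 ^ k * a + 2 ^ k), h k i| ≤ M k)
    (hN : ∀ k < s, ∀ a < 2 ^ (s - (k + 1)), ∀ u ≤ 2 ^ (k + 1),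
      |∑ i ∈ Finset.Ico (2 ^ (k + 1) * a) (2 ^ (k + 1) * a + u), (h (k + 1) i - h k i)| ≤ N k) :
    ∀ u ≤ 2 ^ s, |∑ i ∈ Finset.range u, h s i| ≤ M 0 + ∑ k ∈ Finset.range s, (N k + M k) := by
  have claim : ∀ k ≤ s, ∀ a < 2 ^ (s - k), ∀ u ≤ 2 ^ k,
      |∑ i ∈ Finset.Ico (2 ^ k * a) (2 ^ k * a + u), h k i|
        ≤ M 0 + ∑ k ∈ Finset.range k, (N k + M k) := by
    intro k
    induction k with
    | zero =>
      intro hk a ha u hu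
      have hM0 := hM 0 hk a ha
      have : u = 0 ∨ u = 1 := by simp at hu; omega
      rcases this with rfl | rfl
      · simpa using (abs_nonneg _).trans hM0
      · simpa using hM0
    | succ k ih =>
      intro hk a ha u hu
      have hpow : 2 ^ (s - k) = 2 * 2 ^ (s - (k + 1)) := by
        rw [← pow_succ']; congr 1; omega
      have e1 : 2 ^ (k + 1) * a = 2 ^ k * (2 * a) := by ring
      have e2 : 2 ^ (k + 1) * a + 2 ^ k = 2 ^ k * (2 * a + 1) := by ring
      have hMk := hM k (by omega) (2 * a) (by omega)
      have hNk := hN k (by omega) a ha u hu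
      rw [Finset.sum_range_succ]
      rw [Finset.sum_sub_distrib] at hNk
      -- switching to the lower truncation level costs at most `N k`
      suffices hs : |∑ i ∈ Finset.Ico (2 ^ (k + 1) * a) (2 ^ (k + 1) * a + u), h k i|
          ≤ M 0 + ∑ k ∈ Finset.range k, (N k + M k) + M k by
        rw [abs_le] at hs hNk ⊢
        constructor <;> linarith [hs.1, hs.2, hNk.1, hNk.2]
      rcases le_total u (2 ^ k) with hu' | hu'
      · have := ih (by omega) (2 * a) (by omega) u hu'
        rw [← e1] at this
        linarith [(abs_nonneg _).trans hMk]
      · have := ih (by omega) (2 * a + 1) (by omega) (u - 2 ^ k) (by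
          have : 2 ^ (k + 1) = 2 * 2 ^ k := pow_succ' 2 k
          omega)
        rw [← e2] at this
        rw [← e1] at hMk
        have e3 : 2 ^ (k + 1) * a + 2 ^ k + (u - 2 ^ k) = 2 ^ (k + 1) * a + u := by omega
        rw [e3] at this
        rw [← Finset.sum_Ico_consecutive _ (Nat.le_add_right _ (2 ^ k))
          (Nat.add_le_add_left hu' _)]
        refine (abs_add_le _ _).trans ?_
        linarith
  intro u hu
  have := claim s le_rfl 0 (by simp) u hu
  rw [mul_zero, zero_add] at this
  rwa [Finset.range_eq_Ico]

/-- The supremum over the indices satisfying `P` of `|F i|` has an integrable majorant with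
integral at most `x`.  Bounding the expected supremum through a majorant avoids
measurability questions about the supremum itself. -/
def SupMeanLE {Ω ι : Type*} [MeasurableSpace Ω] (μ : Measure Ω) (P : ι → Prop)
    (F : ι → Ω → ℝ) (x : ℝ) : Prop :=
  ∃ G : Ω → ℝ, Integrable G μ ∧ (∀ i, P i → ∀ ω, |F i ω| ≤ G ω) ∧ ∫ ω, G ω ∂μ ≤ x

/-- Expected-supremum form of `chaining_pointwise`, uniform over an auxiliary parameter `z`
satisfying `P`. The parameter carries the second coordinate, so that the lemma can be applied
once in each coordinate direction. -/
lemma chaining_mean {Ω ζ : Type*} [MeasurableSpace Ω] (μ : Measure Ω) (P : ζ → Prop)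
    (h : ζ → ℕ → ℕ → Ω → ℝ) (M N : ℕ → ℝ) (s : ℕ)
    (hM : ∀ k ≤ s, SupMeanLE μ (fun x : ζ × ℕ => P x.1 ∧ x.2 < 2 ^ (s - k))
      (fun x ω => ∑ i ∈ Finset.Ico (2 ^ k * x.2) (2 ^ k * x.2 + 2 ^ k), h x.1 k i ω) (M k))
    (hN : ∀ k < s, SupMeanLE μ
      (fun x : ζ × ℕ × ℕ => P x.1 ∧ x.2.1 < 2 ^ (s - (k + 1)) ∧ x.2.2 ≤ 2 ^ (k + 1))
      (fun x ω => ∑ i ∈ Finset.Ico (2 ^ (k + 1) * x.2.1) (2 ^ (k + 1) * x.2.1 + x.2.2),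
        (h x.1 (k + 1) i ω - h x.1 k i ω)) (N k)) :
    SupMeanLE μ (fun x : ζ × ℕ => P x.1 ∧ x.2 ≤ 2 ^ s)
      (fun x ω => ∑ i ∈ Finset.range x.2, h x.1 s i ω)
      (M 0 + ∑ k ∈ Finset.range s, (N k + M k)) := by
  choose! GM iM bM eM using hM
  choose! GN iN bN eN using hN
  have hi : ∀ k ∈ Finset.range s, Integrable (fun ω => GN k ω + GM k ω) μ := fun k hk => by
    have := Finset.mem_range.1 hk
    exact (iN k this).add (iM k this.le)
  refine ⟨fun ω => GM 0 ω + ∑ k ∈ Finset.range s, (GN k ω + GM k ω),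
    (iM 0 (Nat.zero_le _)).add (integrable_finsetSum _ hi), ?_, ?_⟩
  · rintro ⟨z, u⟩ ⟨hz, hu⟩ ω
    exact chaining_pointwise (fun k i => h z k i ω) (fun k => GM k ω) (fun k => GN k ω) s
      (fun k hk a ha => bM k hk (z, a) ⟨hz, ha⟩ ω)
      (fun k hk a ha u hu => bN k hk (z, a, u) ⟨hz, ha, hu⟩ ω) u hu
  · rw [integral_add (iM 0 (Nat.zero_le _)) (integrable_finsetSum _ hi),
      integral_finsetSum _ hi]
    refine add_le_add (eM 0 (Nat.zero_le _)) (Finset.sum_le_sum fun k hk => ?_)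
    have := Finset.mem_range.1 hk
    rw [integral_add (iN k this) (iM k this.le)]
    exact add_le_add (eN k this) (eM k this.le)

/-! ### Expected maxima over blocks, strips and rectangles -/

/-- Expected maximum of `|sum over a block|` over all dyadic `2 ^ k × 2 ^ l` blocks of the
`2 ^ s × 2 ^ t` rectangle. Each square has mean at most `2 ^ (k + l - s - t) β ^ 2` and there are
`2 ^ (s + t - k - l)` blocks, so the sum of all squares, hence their maximum, has mean at most
`β ^ 2`; the inequality `2 R ≤ R ^ 2 / β + β` passes to the first moment. -/
lemma block_mean {Ω : Type*} [MeasurableSpace Ω] (μ : Measure Ω) [IsProbabilityMeasure μ]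
    (D : ℕ → ℕ → Ω → ℝ) {β : ℝ} (hβ : 0 < β) {s t k l : ℕ} (hk : k ≤ s) (hl : l ≤ t)
    (hv : ∀ I : Finset (ℕ × ℕ), Integrable (fun ω => (∑ x ∈ I, D x.1 x.2 ω) ^ 2) μ ∧
      2 ^ (s + t) * ∫ ω, (∑ x ∈ I, D x.1 x.2 ω) ^ 2 ∂μ ≤ I.card * β ^ 2) :
    SupMeanLE μ (fun x : ℕ × ℕ => x.1 < 2 ^ (t - l) ∧ x.2 < 2 ^ (s - k))
      (fun x ω => ∑ i ∈ Finset.Ico (2 ^ k * x.2) (2 ^ k * x.2 + 2 ^ k),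
        ∑ j ∈ Finset.Ico (2 ^ l * x.1) (2 ^ l * x.1 + 2 ^ l), D i j ω) β := by
  set J : ℕ × ℕ → Finset (ℕ × ℕ) := fun x =>
    Finset.Ico (2 ^ k * x.2) (2 ^ k * x.2 + 2 ^ k) ×ˢ
      Finset.Ico (2 ^ l * x.1) (2 ^ l * x.1 + 2 ^ l) with hJ
  set B : Finset (ℕ × ℕ) := Finset.range (2 ^ (t - l)) ×ˢ Finset.range (2 ^ (s - k)) with hB
  set Q : ℕ × ℕ → Ω → ℝ := fun x ω => (∑ y ∈ J x, D y.1 y.2 ω) ^ 2 with hQ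
  have hQi : ∀ x ∈ B, Integrable (Q x) μ := fun x _ => (hv (J x)).1
  have hsum : Integrable (fun ω => ∑ x ∈ B, Q x ω) μ := integrable_finsetSum _ hQi
  refine ⟨fun ω => ((∑ x ∈ B, Q x ω) / β + β) / 2,
    ((hsum.div_const _).add (integrable_const _)).div_const _, ?_, ?_⟩
  · rintro ⟨c, a⟩ ⟨hc, ha⟩ ω
    have hmem : (c, a) ∈ B := by
      rw [hB, Finset.mem_product]
      exact ⟨Finset.mem_range.2 hc, Finset.mem_range.2 ha⟩
    have h1 : Q (c, a) ω ≤ ∑ x ∈ B, Q x ω :=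
      Finset.single_le_sum (f := fun x => Q x ω) (fun x _ => sq_nonneg _) hmem
    have h2 : Q (c, a) ω = |∑ i ∈ Finset.Ico (2 ^ k * a) (2 ^ k * a + 2 ^ k),
        ∑ j ∈ Finset.Ico (2 ^ l * c) (2 ^ l * c + 2 ^ l), D i j ω| ^ 2 := by
      rw [sq_abs]
      simp only [hQ, hJ]
      rw [Finset.sum_product]
    dsimp only
    set R := |∑ i ∈ Finset.Ico (2 ^ k * a) (2 ^ k * a + 2 ^ k),
        ∑ j ∈ Finset.Ico (2 ^ l * c) (2 ^ l * c + 2 ^ l), D i j ω|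
    -- `2 R ≤ R² / β + β`
    have h3 : R ^ 2 / β ≤ (∑ x ∈ B, Q x ω) / β := by
      rw [← h2]; gcongr
    have h4 : 2 * R ≤ R ^ 2 / β + β := by
      have : R ^ 2 / β + β - 2 * R = (R - β) ^ 2 / β := by field_simp; ring
      have h5 : 0 ≤ (R - β) ^ 2 / β := by positivity
      linarith
    linarith
  · have h1 : ∫ ω, ∑ x ∈ B, Q x ω ∂μ ≤ β ^ 2 := by
      rw [integral_finsetSum _ hQi]
      have h2 : ∀ x ∈ B, 2 ^ (s + t) * ∫ ω, Q x ω ∂μ ≤ 2 ^ (k + l) * β ^ 2 := fun x _ => by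
        have := (hv (J x)).2
        have hc : ((J x).card : ℝ) = 2 ^ (k + l) := by
          simp [hJ, Finset.card_product, pow_add]
        rwa [hc] at this
      have h3 := Finset.sum_le_sum h2
      rw [← Finset.mul_sum, Finset.sum_const, nsmul_eq_mul] at h3
      have hc : (B.card : ℝ) = 2 ^ (t - l) * 2 ^ (s - k) := by
        simp [hB, Finset.card_product]
      rw [hc, ← mul_assoc] at h3
      have he : (2 : ℝ) ^ (t - l) * 2 ^ (s - k) * 2 ^ (k + l) = 2 ^ (s + t) := by
        rw [← pow_add, ← pow_add]; congr 1; omega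
      rw [he] at h3
      exact le_of_mul_le_mul_left h3 (by positivity)
    rw [integral_div, integral_add (hsum.div_const _) (integrable_const _), integral_div]
    have h2 : (∫ ω, ∑ x ∈ B, Q x ω ∂μ) / β ≤ β := by
      rw [div_le_iff₀ hβ]; nlinarith
    simp
    linarith

lemma sum_pow_rev_le {σ : ℝ} (h0 : 0 < σ) (h1 : σ < 1) (n : ℕ) :
    ∑ k ∈ Finset.range n, σ ^ (n - 1 - k) ≤ 1 / (1 - σ) := by
  rw [Finset.sum_range_reflect (fun k => σ ^ k) n, one_div, ← tsum_geometric_of_lt_one h0.le h1]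
  exact (summable_geometric_of_lt_one h0.le h1).sum_le_tsum _ (fun _ _ => by positivity)

lemma integral_add_add_const {Ω : Type*} [MeasurableSpace Ω] (μ : Measure Ω)
    [IsProbabilityMeasure μ] {G G' : Ω → ℝ} (hG : Integrable G μ) (hG' : Integrable G' μ) (c : ℝ) :
    ∫ ω, (G ω + G' ω + c) ∂μ = ∫ ω, G ω ∂μ + ∫ ω, G' ω ∂μ + c := by
  rw [integral_add (f := fun ω => G ω + G' ω) (hG.add hG') (integrable_const _),
    integral_add hG hG']
  simp

/-- Chaining in the first coordinate: expected maximum, over all dyadic intervals of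
length `2 ^ l` in the second coordinate `j` and all `u ≤ 2 ^ s`, of the
sums over such `j` and `i < u`. Here `D r i j` is the centred variable at the `r`-th truncation level; blocks of length `2 ^ k` inside such a strip are
measured at level `r₀ + (s - k)`, whose contribution decays like `σ ^ (s - k)`. -/
lemma strip_mean {Ω : Type*} [MeasurableSpace Ω] (μ : Measure Ω) [IsProbabilityMeasure μ]
    (D : ℕ → ℕ → ℕ → Ω → ℝ) (q : ℕ → ℝ) {g σ : ℝ} (hg : 0 < g) (hσ0 : 0 < σ) (hσ1 : σ < 1)
    {s t : ℕ} (hq0 : ∀ r, 0 ≤ q r)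
    (hD : ∀ r i j ω, -q (r + 1) ≤ D r i j ω - D (r + 1) i j ω)
    (hv : ∀ r, ∀ I : Finset (ℕ × ℕ), Integrable (fun ω => (∑ x ∈ I, D r x.1 x.2 ω) ^ 2) μ ∧
      2 ^ (s + t) * ∫ ω, (∑ x ∈ I, D r x.1 x.2 ω) ^ 2 ∂μ ≤ I.card * (g * σ ^ r) ^ 2)
    (hqs : ∀ r, 2 ^ (s + t) * q r ≤ 2 ^ r * (g * σ ^ r))
    {l r₀ : ℕ} (hl : l ≤ t) (hr₀ : r₀ ≤ t - l + 1) :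
    SupMeanLE μ (fun x : ℕ × ℕ => x.1 < 2 ^ (t - l) ∧ x.2 ≤ 2 ^ s)
      (fun x ω => ∑ i ∈ Finset.range x.2,
        ∑ j ∈ Finset.Ico (2 ^ l * x.1) (2 ^ l * x.1 + 2 ^ l), D r₀ i j ω)
      (g * σ ^ r₀ * (12 / (1 - σ))) := by
  have hchain := chaining_mean μ (fun c : ℕ => c < 2 ^ (t - l))
    (fun c k i ω => ∑ j ∈ Finset.Ico (2 ^ l * c) (2 ^ l * c + 2 ^ l), D (r₀ + (s - k)) i j ω)
    (fun k => g * σ ^ (r₀ + (s - k))) (fun k => 10 * (g * σ ^ (r₀ + (s - 1 - k)))) s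
    (fun k hk => block_mean μ (D (r₀ + (s - k))) (by positivity) hk hl (hv _)) ?_
  · obtain ⟨G, hG, hb, hi⟩ := hchain
    refine ⟨G, hG, by simpa using hb, hi.trans ?_⟩
    have h1 : ∑ k ∈ Finset.range s,
        (10 * (g * σ ^ (r₀ + (s - 1 - k))) + g * σ ^ (r₀ + (s - k)))
        ≤ ∑ k ∈ Finset.range s, 11 * (g * σ ^ r₀) * σ ^ (s - 1 - k) := by
      refine Finset.sum_le_sum fun k hk => ?_
      have h2 : σ ^ (s - k) ≤ σ ^ (s - 1 - k) := pow_le_pow_of_le_one hσ0.le hσ1.le (by omega)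
      have h3 : 0 < g * σ ^ r₀ := by positivity
      rw [pow_add, pow_add]
      nlinarith
    rw [← Finset.mul_sum] at h1
    have h2 := sum_pow_rev_le hσ0 hσ1 s
    have h3 : 0 < g * σ ^ r₀ := by positivity
    have h4 : σ ^ (s - 0) ≤ 1 := pow_le_one₀ hσ0.le hσ1.le
    have h5 : 1 ≤ 1 / (1 - σ) := by rw [le_div_iff₀] <;> linarith
    have h6 : 12 / (1 - σ) = 12 * (1 / (1 - σ)) := by ring
    rw [h6, pow_add]
    nlinarith
  · intro k hk
    -- the change of truncation level on a block of size `2 ^ (k + 1) × 2 ^ l`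
    set r := r₀ + (s - 1 - k) with hr
    have hr1 : r₀ + (s - (k + 1)) = r := by omega
    have hr2 : r₀ + (s - k) = r + 1 := by omega
    obtain ⟨G, hG, hb, hi⟩ := block_mean μ (D r) (β := g * σ ^ r) (by positivity)
      (Nat.succ_le_of_lt hk) hl (hv _)
    obtain ⟨G', hG', hb', hi'⟩ := block_mean μ (D (r + 1)) (β := g * σ ^ (r + 1)) (by positivity)
      (Nat.succ_le_of_lt hk) hl (hv _)
    refine ⟨fun ω => G ω + G' ω + 2 ^ (k + 1) * (2 ^ l * q (r + 1)),
      (hG.add hG').add (integrable_const _), ?_, ?_⟩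
    · rintro ⟨c, a, u⟩ ⟨hc, ha, hu⟩ ω
      dsimp only at hc ha hu ⊢
      rw [hr1, hr2]
      have := abs_sum_subset_le
        (Finset.Ico_subset_Ico_right (a := 2 ^ (k + 1) * a) (Nat.add_le_add_left hu (2 ^ (k + 1) * a)))
        (fun i => ∑ j ∈ Finset.Ico (2 ^ l * c) (2 ^ l * c + 2 ^ l), D r i j ω -
          ∑ j ∈ Finset.Ico (2 ^ l * c) (2 ^ l * c + 2 ^ l), D (r + 1) i j ω)
        (κ := 2 ^ l * q (r + 1)) (mul_nonneg (by positivity) (hq0 _)) (fun i _ => by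
          rw [← Finset.sum_sub_distrib]
          have := Finset.card_nsmul_le_sum (Finset.Ico (2 ^ l * c) (2 ^ l * c + 2 ^ l))
            (fun j => D r i j ω - D (r + 1) i j ω) (-q (r + 1)) (fun j _ => hD r i j ω)
          simpa using this)
      refine this.trans ?_
      rw [Finset.sum_sub_distrib]
      have h1 := hb (c, a) ⟨hc, ha⟩ ω
      have h2 := hb' (c, a) ⟨hc, ha⟩ ω
      dsimp only [Nat.succ_eq_add_one] at h1 h2
      simp only [Nat.card_Ico, add_tsub_cancel_left, Nat.cast_pow, Nat.cast_ofNat]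
      have h3 := abs_sub (∑ i ∈ Finset.Ico (2 ^ (k + 1) * a) (2 ^ (k + 1) * a + 2 ^ (k + 1)),
        ∑ j ∈ Finset.Ico (2 ^ l * c) (2 ^ l * c + 2 ^ l), D r i j ω)
        (∑ i ∈ Finset.Ico (2 ^ (k + 1) * a) (2 ^ (k + 1) * a + 2 ^ (k + 1)),
        ∑ j ∈ Finset.Ico (2 ^ l * c) (2 ^ l * c + 2 ^ l), D (r + 1) i j ω)
      linarith
    · rw [integral_add_add_const μ hG hG']
      have h1 : (2 : ℝ) ^ (k + 1) * (2 ^ l * q (r + 1)) ≤ 8 * (g * σ ^ (r + 1)) := by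
        have h2 := hqs (r + 1)
        have h3 : (2 : ℝ) ^ (k + 1) * 2 ^ l * 2 ^ (r + 1) ≤ 4 * 2 ^ (s + t) := by
          have : (4 : ℝ) = 2 ^ 2 := by norm_num
          rw [this, ← pow_add, ← pow_add, ← pow_add]
          exact pow_le_pow_right₀ (by norm_num) (by omega)
        have h4 : 0 < (2 : ℝ) ^ (s + t) := by positivity
        have h5 : 0 < g * σ ^ (r + 1) := by positivity
        refine le_of_mul_le_mul_left ?_ h4
        calc (2 : ℝ) ^ (s + t) * (2 ^ (k + 1) * (2 ^ l * q (r + 1)))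
            = (2 ^ (k + 1) * 2 ^ l) * (2 ^ (s + t) * q (r + 1)) := by ring
          _ ≤ (2 ^ (k + 1) * 2 ^ l) * (2 ^ (r + 1) * (g * σ ^ (r + 1))) := by gcongr
          _ = (2 ^ (k + 1) * 2 ^ l * 2 ^ (r + 1)) * (g * σ ^ (r + 1)) := by ring
          _ ≤ (4 * 2 ^ (s + t)) * (g * σ ^ (r + 1)) := by gcongr
          _ ≤ _ := by nlinarith
      have h2 : g * σ ^ (r + 1) ≤ g * σ ^ r := by
        have := pow_le_pow_of_le_one hσ0.le hσ1.le (Nat.le_succ r)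
        gcongr
      linarith

/-- Chaining in the second coordinate, with `strip_mean` supplying the bounds for full strips:
expected maximum of all sums over the rectangles `[0, u) × [0, v)`, `u ≤ 2 ^ s`, `v ≤ 2 ^ t`.
The hypotheses say that passing from level `r + 1` to level `r` decreases no term by more than
`q (r + 1)` (`hD`), that sums over index sets have variance proportional to their cardinality with
a constant decaying in `r` (`hv`), and that the drift `q` is small enough (`hqs`). -/
lemma rectangle_mean {Ω : Type*} [MeasurableSpace Ω] (μ : Measure Ω) [IsProbabilityMeasure μ]
    (D : ℕ → ℕ → ℕ → Ω → ℝ) (q : ℕ → ℝ) {g σ : ℝ} (hg : 0 < g) (hσ0 : 0 < σ) (hσ1 : σ < 1)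
    {s t : ℕ} (hq0 : ∀ r, 0 ≤ q r)
    (hD : ∀ r i j ω, -q (r + 1) ≤ D r i j ω - D (r + 1) i j ω)
    (hv : ∀ r, ∀ I : Finset (ℕ × ℕ), Integrable (fun ω => (∑ x ∈ I, D r x.1 x.2 ω) ^ 2) μ ∧
      2 ^ (s + t) * ∫ ω, (∑ x ∈ I, D r x.1 x.2 ω) ^ 2 ∂μ ≤ I.card * (g * σ ^ r) ^ 2)
    (hqs : ∀ r, 2 ^ (s + t) * q r ≤ 2 ^ r * (g * σ ^ r)) :
    SupMeanLE μ (fun x : ℕ × ℕ => x.1 ≤ 2 ^ s ∧ x.2 ≤ 2 ^ t)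
      (fun x ω => ∑ i ∈ Finset.range x.1, ∑ j ∈ Finset.range x.2, D 0 i j ω)
      (96 / (1 - σ) ^ 2 * g) := by
  set Λ : ℝ := 12 / (1 - σ) with hΛ
  have hσ' : 0 < 1 - σ := by linarith
  have hΛ1 : 12 ≤ Λ := by rw [hΛ, le_div_iff₀] <;> linarith
  have hchain := chaining_mean μ (fun u : ℕ => u ≤ 2 ^ s)
    (fun u l j ω => ∑ i ∈ Finset.range u, D (t - l) i j ω)
    (fun l => g * σ ^ (t - l) * Λ) (fun l => 3 * Λ * (g * σ ^ (t - 1 - l))) t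
    (fun l hl => ?_) ?_
  · obtain ⟨G, hG, hb, hi⟩ := hchain
    refine ⟨G, hG, ?_, hi.trans ?_⟩
    · rintro ⟨u, v⟩ huv ω
      have := hb (u, v) huv ω
      dsimp only at this ⊢
      rw [Finset.sum_comm]
      simpa using this
    have h1 : ∑ k ∈ Finset.range t, (3 * Λ * (g * σ ^ (t - 1 - k)) + g * σ ^ (t - k) * Λ)
        ≤ ∑ k ∈ Finset.range t, 4 * (g * Λ) * σ ^ (t - 1 - k) := by
      refine Finset.sum_le_sum fun k hk => ?_
      have h2 : σ ^ (t - k) ≤ σ ^ (t - 1 - k) := pow_le_pow_of_le_one hσ0.le hσ1.le (by omega)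
      have h3 : 0 < g * Λ := by positivity
      nlinarith
    rw [← Finset.mul_sum] at h1
    have h2 := sum_pow_rev_le hσ0 hσ1 t
    have h3 : 0 < g * Λ := by positivity
    have h4 : σ ^ (t - 0) ≤ 1 := pow_le_one₀ hσ0.le hσ1.le
    have h5 : 1 ≤ 1 / (1 - σ) := by rw [le_div_iff₀] <;> linarith
    have h6 : 96 / (1 - σ) ^ 2 * g = 8 * (g * Λ) * (1 / (1 - σ)) := by
      rw [hΛ]; field_simp; ring
    rw [h6]
    nlinarith
  · obtain ⟨G, hG, hb, hi⟩ := strip_mean μ D q hg hσ0 hσ1 hq0 hD hv hqs hl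
      (r₀ := t - l) (Nat.le_succ _)
    refine ⟨G, hG, ?_, hi⟩
    rintro ⟨u, c⟩ ⟨hu, hc⟩ ω
    have := hb (c, u) ⟨hc, hu⟩ ω
    dsimp only at this ⊢
    rwa [Finset.sum_comm]
  · intro l hl
    -- the change of truncation level on a strip of width `2 ^ (l + 1)`
    set r := t - 1 - l with hr
    have hr1 : t - (l + 1) = r := by omega
    have hr2 : t - l = r + 1 := by omega
    obtain ⟨G, hG, hb, hi⟩ := strip_mean μ D q hg hσ0 hσ1 hq0 hD hv hqs
      (Nat.succ_le_of_lt hl) (r₀ := r) (by omega)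
    obtain ⟨G', hG', hb', hi'⟩ := strip_mean μ D q hg hσ0 hσ1 hq0 hD hv hqs
      (Nat.succ_le_of_lt hl) (r₀ := r + 1) (by omega)
    refine ⟨fun ω => G ω + G' ω + 2 ^ (l + 1) * (2 ^ s * q (r + 1)),
      (hG.add hG').add (integrable_const _), ?_, ?_⟩
    · rintro ⟨u, c, v⟩ ⟨hu, hc, hv'⟩ ω
      dsimp only at hc hu hv' ⊢
      rw [hr1, hr2]
      have := abs_sum_subset_le
        (Finset.Ico_subset_Ico_right (a := 2 ^ (l + 1) * c) (Nat.add_le_add_left hv' (2 ^ (l + 1) * c)))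
        (fun j => ∑ i ∈ Finset.range u, D r i j ω - ∑ i ∈ Finset.range u, D (r + 1) i j ω)
        (κ := 2 ^ s * q (r + 1)) (mul_nonneg (by positivity) (hq0 _)) (fun j _ => by
          rw [← Finset.sum_sub_distrib]
          have := Finset.card_nsmul_le_sum (Finset.range u)
            (fun i => D r i j ω - D (r + 1) i j ω) (-q (r + 1)) (fun i _ => hD r i j ω)
          have hu' : (u : ℝ) ≤ 2 ^ s := by exact_mod_cast hu
          have hq' := hq0 (r + 1)
          simp only [Finset.card_range, nsmul_eq_mul] at this
          nlinarith)
      refine this.trans ?_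
      rw [Finset.sum_sub_distrib]
      have h1 := hb (c, u) ⟨hc, hu⟩ ω
      have h2 := hb' (c, u) ⟨hc, hu⟩ ω
      dsimp only [Nat.succ_eq_add_one] at h1 h2
      rw [Finset.sum_comm] at h1 h2
      simp only [Nat.card_Ico, add_tsub_cancel_left, Nat.cast_pow, Nat.cast_ofNat]
      have h3 := abs_sub (∑ j ∈ Finset.Ico (2 ^ (l + 1) * c) (2 ^ (l + 1) * c + 2 ^ (l + 1)),
        ∑ i ∈ Finset.range u, D r i j ω)
        (∑ j ∈ Finset.Ico (2 ^ (l + 1) * c) (2 ^ (l + 1) * c + 2 ^ (l + 1)),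
        ∑ i ∈ Finset.range u, D (r + 1) i j ω)
      linarith
    · rw [integral_add_add_const μ hG hG']
      have h1 : (2 : ℝ) ^ (l + 1) * (2 ^ s * q (r + 1)) ≤ 2 * (g * σ ^ (r + 1)) := by
        have h2 := hqs (r + 1)
        have h3 : (2 : ℝ) ^ (l + 1) * (2 ^ s * q (r + 1)) * 2 ^ r = 2 ^ (s + t) * q (r + 1) := by
          have : s + t = l + 1 + s + r := by omega
          rw [this, pow_add _ (l + 1 + s), pow_add _ (l + 1)]; ring
        rw [← h3, pow_succ (2 : ℝ) r] at h2
        have h4 : 0 < (2 : ℝ) ^ r := by positivity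
        nlinarith
      have h2 : g * σ ^ (r + 1) ≤ g * σ ^ r := by
        have := pow_le_pow_of_le_one hσ0.le hσ1.le (Nat.le_succ r)
        gcongr
      have h3 : 0 < g * σ ^ r := by positivity
      nlinarith

/-! ### Tails, truncated second moments and Condition `(H_2)` -/

/-- The Feller condition `n P(|Y| > n ^ (1 / p)) → 0` as a single tail inequality valid for all
`x ≤ b` with `b` large, at the price of an exponent `p' > p`. For `x` bounded away from `0` it comes
from the hypothesis; for small `x` the trivial bound `1` suffices, since `b ^ (p' - p) → ∞`. -/
lemma tail_bound {Ω : Type*} [MeasureSpace Ω] [IsProbabilityMeasure (volume : Measure Ω)]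
    {p p' : ℝ} (hp1 : 1 ≤ p) (hpp' : p < p') (Y : Ω → ℝ)
    (hY : Tendsto (fun n : ℕ => (n : ℝ) * (volume {ω | (n : ℝ) ^ (1 / p) < |Y ω|}).toReal)
      atTop (nhds 0)) {η : ℝ} (hη : 0 < η) :
    ∃ B : ℝ, 0 < B ∧ ∀ b, B ≤ b → ∀ x, 0 < x → x ≤ b →
      (volume : Measure Ω).real {ω | x < |Y ω|} ≤ η / b ^ p * (b / x) ^ p' := by
  have hp0 : 0 < p := by linarith
  obtain ⟨N₀, hN₀⟩ := Filter.eventually_atTop.1 (hY.eventually (gt_mem_nhds (half_pos hη)))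
  set x₀ : ℝ := N₀ + 1 with hx₀
  have hx₀1 : 1 ≤ x₀ := by rw [hx₀]; linarith [Nat.cast_nonneg (α := ℝ) N₀]
  -- the hypothesis along integers passes to real arguments at the cost of a factor `2`
  have htail : ∀ x, x₀ ≤ x → x ^ p * (volume : Measure Ω).real {ω | x < |Y ω|} ≤ η := by
    intro x hx
    have hx1 : 1 ≤ x := hx₀1.trans hx
    have hxp : x ≤ x ^ p := by
      simpa using Real.rpow_le_rpow_of_exponent_le hx1 hp1
    set n := ⌊x ^ p⌋₊ with hn
    have hn1 : (n : ℝ) ≤ x ^ p := Nat.floor_le (by positivity)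
    have hn2 : x ^ p < n + 1 := Nat.lt_floor_add_one _
    have hnN : N₀ + 1 ≤ n := Nat.le_floor (by push_cast; linarith)
    have hn3 : (1 : ℝ) ≤ n := by exact_mod_cast (by omega : 1 ≤ n)
    have hle : (n : ℝ) ^ (1 / p) ≤ x := by
      calc (n : ℝ) ^ (1 / p) ≤ (x ^ p) ^ (1 / p) :=
            Real.rpow_le_rpow (by positivity) hn1 (by positivity)
        _ = x := by rw [← Real.rpow_mul (by positivity), mul_one_div_cancel hp0.ne', Real.rpow_one]
    have hmono : (volume : Measure Ω).real {ω | x < |Y ω|}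
        ≤ (volume : Measure Ω).real {ω | (n : ℝ) ^ (1 / p) < |Y ω|} :=
      measureReal_mono fun ω (h : x < |Y ω|) => lt_of_le_of_lt hle h
    have h1 := hN₀ n (by omega)
    change (n : ℝ) * (volume : Measure Ω).real {ω | (n : ℝ) ^ (1 / p) < |Y ω|} < η / 2 at h1
    have h2 : 0 ≤ (volume : Measure Ω).real {ω | x < |Y ω|} := measureReal_nonneg
    calc x ^ p * (volume : Measure Ω).real {ω | x < |Y ω|}
        ≤ (2 * n) * (volume : Measure Ω).real {ω | (n : ℝ) ^ (1 / p) < |Y ω|} := by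
          gcongr; linarith
      _ ≤ η := by linarith
  obtain ⟨B₁, hB₁⟩ := Filter.eventually_atTop.1
    ((tendsto_rpow_atTop (sub_pos.2 hpp')).eventually_ge_atTop (x₀ ^ p' / η))
  refine ⟨max B₁ 1, by positivity, fun b hb x hx hxb => ?_⟩
  have hb0 : 0 < b := hx.trans_le hxb
  rcases le_or_gt x₀ x with h | h
  · have h1 := htail x h
    have h2 : (b / x) ^ p ≤ (b / x) ^ p' :=
      Real.rpow_le_rpow_of_exponent_le (by rwa [le_div_iff₀ hx, one_mul]) hpp'.le
    have h3 : 0 < x ^ p := by positivity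
    have h4 : 0 < b ^ p := by positivity
    calc (volume : Measure Ω).real {ω | x < |Y ω|} ≤ η / x ^ p := by
          rw [le_div_iff₀ h3]; linarith
      _ = η / b ^ p * (b / x) ^ p := by
          rw [Real.div_rpow hb0.le hx.le]; field_simp
      _ ≤ _ := by gcongr
  · have h1 := hB₁ b ((le_max_left _ _).trans hb)
    rw [div_le_iff₀ hη, Real.rpow_sub hb0] at h1
    have h2 : x ^ p' ≤ x₀ ^ p' := Real.rpow_le_rpow hx.le h.le (by linarith)
    have h3 : 0 < x ^ p' := by positivity
    calc (volume : Measure Ω).real {ω | x < |Y ω|} ≤ 1 := measureReal_le_one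
      _ ≤ (b ^ p' / b ^ p * η) / x ^ p' := by rw [le_div_iff₀ h3]; linarith
      _ = _ := by rw [Real.div_rpow hb0.le hx.le]; ring

/-- Truncated second moments under the tail inequality of `tail_bound`, from the layer-cake
formula. The factor `(c / b) ^ (2 - p')` is the gain from truncating at `c` instead of `b`, and is
where `p' < 2` enters. -/
lemma second_moment_le {Ω : Type*} [MeasureSpace Ω] [IsProbabilityMeasure (volume : Measure Ω)]
    {ξ : Ω → ℝ} (hξ : Measurable ξ) {A b c p' : ℝ} (hc : 0 < c) (hcb : c ≤ b)
    (hp' : p' < 2)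
    (htail : ∀ x, 0 < x → x ≤ b →
      (volume : Measure Ω).real {ω | x < |ξ ω|} ≤ A * (b / x) ^ p') :
    ∫ ω, (min |ξ ω| c) ^ 2 ≤ A * (1 / (1 - p' / 2)) * b ^ 2 * (c / b) ^ (2 - p') := by
  have hb : 0 < b := hc.trans_le hcb
  have hm : Measurable fun ω => (min |ξ ω| c) ^ 2 := by fun_prop
  have hbd : ∀ ω, (min |ξ ω| c) ^ 2 ≤ c ^ 2 := fun ω =>
    pow_le_pow_left₀ (le_min (abs_nonneg _) hc.le) (min_le_right _ _) 2
  have hint : Integrable fun ω => (min |ξ ω| c) ^ 2 :=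
    Integrable.of_bound hm.aestronglyMeasurable (c ^ 2) (ae_of_all _ fun ω => by
      rw [Real.norm_eq_abs, abs_of_nonneg (sq_nonneg _)]; exact hbd ω)
  rw [hint.integral_eq_integral_meas_lt (ae_of_all _ fun ω => sq_nonneg _)]
  have hsub : ∫ t in Set.Ioi (0 : ℝ), (volume : Measure Ω).real {ω | t < (min |ξ ω| c) ^ 2}
      = ∫ t in Set.Ioc 0 (c ^ 2), (volume : Measure Ω).real {ω | t < (min |ξ ω| c) ^ 2} := by
    refine setIntegral_eq_of_subset_of_forall_sdiff_eq_zero measurableSet_Ioi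
      (fun t ht => ht.1) fun t ht => ?_
    have h0 : {ω | t < (min |ξ ω| c) ^ 2} = ∅ := by
      ext ω
      simp only [Set.mem_ofPred_eq, Set.mem_empty_iff_false, iff_false, not_lt]
      by_contra hlt
      push Not at hlt
      exact ht.2 ⟨ht.1, hlt.le.trans (hbd ω)⟩
    rw [h0]; simp
  rw [hsub]
  have hpow : -1 < -(p' / 2) := by linarith
  have hgi : IntegrableOn (fun t : ℝ => A * b ^ p' * t ^ (-(p' / 2))) (Set.Ioc 0 (c ^ 2)) := by
    have := (intervalIntegral.intervalIntegrable_rpow' (a := 0) (b := c ^ 2) hpow).const_mul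
      (A * b ^ p')
    rwa [intervalIntegrable_iff_integrableOn_Ioc_of_le (by positivity)] at this
  calc ∫ t in Set.Ioc 0 (c ^ 2), (volume : Measure Ω).real {ω | t < (min |ξ ω| c) ^ 2}
      ≤ ∫ t in Set.Ioc 0 (c ^ 2), A * b ^ p' * t ^ (-(p' / 2)) := by
        refine integral_mono_of_nonneg (ae_of_all _ fun t => measureReal_nonneg) hgi ?_
        refine (ae_restrict_iff' measurableSet_Ioc).2 (ae_of_all _ fun t ht => ?_)
        have ht0 : 0 < √t := Real.sqrt_pos.2 ht.1
        have htc : √t ≤ b := (Real.sqrt_le_iff.2 ⟨hc.le, ht.2⟩).trans hcb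
        refine (measureReal_mono fun ω hω => ?_).trans ((htail _ ht0 htc).trans_eq ?_)
        · have h1 : √t < min |ξ ω| c :=
            (Real.sqrt_lt' (lt_of_le_of_ne (le_min (abs_nonneg _) hc.le) (fun h0 => by
              have : t < (min |ξ ω| c) ^ 2 := hω
              rw [← h0] at this
              have := ht.1
              norm_num at *
              linarith))).2 hω
          exact h1.trans_le (min_le_left _ _)
        · dsimp only
          rw [Real.div_rpow hb.le ht0.le, Real.sqrt_eq_rpow, ← Real.rpow_mul ht.1.le,
            Real.rpow_neg ht.1.le]
          have : 1 / 2 * p' = p' / 2 := by ring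
          rw [this]; ring
    _ = _ := by
        rw [← intervalIntegral.integral_of_le (by positivity),
          intervalIntegral.integral_const_mul, integral_rpow (Or.inl hpow),
          Real.zero_rpow (by linarith), Real.div_rpow hc.le hb.le, Real.rpow_sub hb,
          ← Real.rpow_natCast c 2, ← Real.rpow_mul hc.le]
        have h1 : ((2 : ℕ) : ℝ) * (-(p' / 2) + 1) = 2 - p' := by push_cast; ring
        have h2 : -(p' / 2) + 1 = 1 - p' / 2 := by ring
        have h3 : b ^ (2 : ℝ) = b ^ 2 := by exact_mod_cast Real.rpow_natCast b 2
        have h4 : 1 - p' / 2 ≠ 0 := by linarith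
        have h5 : 0 < b ^ p' := by positivity
        rw [h1, h2, h3]
        field_simp
        ring

/-- Condition `(H_2)` for a bounded monotone transform `f` of the array, shifted to indices
starting at `0`: the variance of a sum over `I` is at most a constant times `|I|` times a bound for
the truncated second moments. Boundedness of `f` gives all the integrability requirements. -/
lemma variance_bound {Ω : Type*} [MeasureSpace Ω] [IsProbabilityMeasure (volume : Measure Ω)]
    {X : ℕ → ℕ → Ω → ℝ} (hmeas : ∀ m n : ℕ, 1 ≤ m → 1 ≤ n → Measurable (X m n))
    (hH : CondH 1 fun k : PIdx => X k.1.1 k.1.2) :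
    ∃ C : ℝ, 0 < C ∧ ∀ (I : Finset (ℕ × ℕ)) (f : ℝ → ℝ), Monotone f → ∀ c V : ℝ,
      (∀ x, |f x| ≤ min |x| c) →
      (∀ i j, ∫ ω, (min |X (i + 1) (j + 1) ω| c) ^ 2 ≤ V) →
      Integrable (fun ω => (∑ x ∈ I, (f (X (x.1 + 1) (x.2 + 1) ω) -
        ∫ ω', f (X (x.1 + 1) (x.2 + 1) ω'))) ^ 2) ∧
      ∫ ω, (∑ x ∈ I, (f (X (x.1 + 1) (x.2 + 1) ω) -
        ∫ ω', f (X (x.1 + 1) (x.2 + 1) ω'))) ^ 2 ≤ I.card * (C * V) := by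
  obtain ⟨C, hC⟩ := hH
  refine ⟨2 * |C| + 1, by positivity, fun I f hf c V hfc hV => ?_⟩
  have hmX : ∀ i j : ℕ, Measurable (X (i + 1) (j + 1)) := fun i j =>
    hmeas _ _ (by omega) (by omega)
  have hfX : ∀ i j : ℕ, Measurable fun ω => f (X (i + 1) (j + 1) ω) := fun i j =>
    hf.measurable.comp (hmX i j)
  have hfb : ∀ x, |f x| ≤ c := fun x => (hfc x).trans (min_le_right _ _)
  have hfi : ∀ i j : ℕ, Integrable fun ω => f (X (i + 1) (j + 1) ω) := fun i j =>
    Integrable.of_bound (hfX i j).aestronglyMeasurable c (ae_of_all _ fun ω => hfb _)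
  have hfsq : ∀ i j : ℕ, Integrable fun ω => f (X (i + 1) (j + 1) ω) ^ 2 := fun i j =>
    Integrable.of_bound ((hfX i j).pow_const 2).aestronglyMeasurable (c ^ 2)
      (ae_of_all _ fun ω => by
        rw [norm_pow]; exact pow_le_pow_left₀ (norm_nonneg _) (hfb _) 2)
  have hc : 0 ≤ c := (abs_nonneg _).trans (hfb 0)
  have hmin : ∀ i j : ℕ, Integrable fun ω => (min |X (i + 1) (j + 1) ω| c) ^ 2 := fun i j => by
    have hm := hmX i j
    refine Integrable.of_bound (by fun_prop) (c ^ 2)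
      (ae_of_all _ fun ω => ?_)
    have h0 : 0 ≤ min |X (i + 1) (j + 1) ω| c := le_min (abs_nonneg _) hc
    rw [norm_pow, Real.norm_eq_abs, abs_of_nonneg h0]
    exact pow_le_pow_left₀ h0 (min_le_right _ _) 2
  have hE : ∀ i j : ℕ, ∫ ω, f (X (i + 1) (j + 1) ω) ^ 2 ≤ V := fun i j =>
    (integral_mono (hfsq i j) (hmin i j) fun ω => by
      rw [← sq_abs (f _)]
      exact pow_le_pow_left₀ (abs_nonneg _) (hfc _) 2).trans (hV i j)
  have hV0 : 0 ≤ V := (integral_nonneg fun ω => sq_nonneg _).trans (hE 0 0)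
  have hSm : Measurable fun ω => ∑ x ∈ I, (f (X (x.1 + 1) (x.2 + 1) ω) -
        ∫ ω', f (X (x.1 + 1) (x.2 + 1) ω')) :=
    Finset.measurable_fun_sum _ fun x _ => (hfX x.1 x.2).sub_const _
  have hSi : Integrable (fun ω => (∑ x ∈ I, (f (X (x.1 + 1) (x.2 + 1) ω) -
        ∫ ω', f (X (x.1 + 1) (x.2 + 1) ω'))) ^ 2) := by
    refine Integrable.of_bound (hSm.pow_const 2).aestronglyMeasurable
      ((∑ x ∈ I, (c + |∫ ω', f (X (x.1 + 1) (x.2 + 1) ω')|)) ^ 2) (ae_of_all _ fun ω => ?_)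
    rw [norm_pow]
    refine pow_le_pow_left₀ (norm_nonneg _) ?_ 2
    refine (norm_sum_le _ _).trans (Finset.sum_le_sum fun x _ => ?_)
    exact (norm_sub_le _ _).trans (add_le_add (hfb _) le_rfl)
  refine ⟨hSi, ?_⟩
  rcases I.eq_empty_or_nonempty with rfl | hI
  · simp
  set e : ℕ × ℕ ↪ PIdx := ⟨fun x => ⟨(x.1 + 1, x.2 + 1), by simp⟩, fun x y hxy => by
    have := congrArg Subtype.val hxy
    simp only [Prod.mk.injEq, add_left_inj] at this
    exact Prod.ext this.1 this.2⟩ with he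
  have h21 : (2 : ℝ) * 1 = (2 : ℕ) := by norm_num
  have hsum : ∀ ω, ∑ l ∈ I.map e, (f (X l.1.1 l.1.2 ω) - ∫ ω', f (X l.1.1 l.1.2 ω'))
      = ∑ x ∈ I, (f (X (x.1 + 1) (x.2 + 1) ω) - ∫ ω', f (X (x.1 + 1) (x.2 + 1) ω')) :=
    fun ω => Finset.sum_map _ _ _
  have key := hC (I.map e) (hI.map) (fun _ => f) (fun _ _ => hf)
    (fun l hl => by
      obtain ⟨x, _, rfl⟩ := Finset.mem_map.1 hl
      exact hfi x.1 x.2)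
    (fun l hl => by
      obtain ⟨x, _, rfl⟩ := Finset.mem_map.1 hl
      exact hfsq x.1 x.2)
    (fun l hl => by
      obtain ⟨x, _, rfl⟩ := Finset.mem_map.1 hl
      simp only [h21, Real.rpow_natCast, sq_abs]
      exact hfsq x.1 x.2)
    (by
      simp only [h21, Real.rpow_natCast, sq_abs, hsum]
      exact hSi)
  simp only [h21, Real.rpow_natCast, sq_abs, hsum, Real.rpow_one, Finset.card_map] at key
  have hsup : (I.map e).sup' hI.map (fun l => ∫ ω, f (X l.1.1 l.1.2 ω) ^ 2) ≤ V :=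
    Finset.sup'_le _ _ fun l hl => by
      obtain ⟨x, _, rfl⟩ := Finset.mem_map.1 hl
      exact hE x.1 x.2
  have hsup0 : 0 ≤ (I.map e).sup' hI.map (fun l => ∫ ω, f (X l.1.1 l.1.2 ω) ^ 2) := by
    obtain ⟨l, hl⟩ := hI.map (f := e)
    exact (integral_nonneg fun ω => sq_nonneg _).trans
      (Finset.le_sup' (fun l : PIdx => ∫ ω, f (X l.1.1 l.1.2 ω) ^ 2) hl)
  set S := (I.map e).sup' hI.map (fun l => ∫ ω, f (X l.1.1 l.1.2 ω) ^ 2)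
  have hcard : (0 : ℝ) ≤ I.card := Nat.cast_nonneg _
  calc _ ≤ C * (I.card * S + I.card * S) := key
    _ ≤ |C| * (I.card * V + I.card * V) := by
        refine mul_le_mul (le_abs_self C) (by gcongr) (by positivity) (abs_nonneg _)
    _ ≤ _ := by nlinarith [mul_nonneg hcard hV0]

/-! ### The maximal inequality for one-sided truncations -/

/-- Truncation of the positive part of `x` at level `c`. -/
def truncPos (c x : ℝ) : ℝ := min (max x 0) c

lemma truncPos_nonneg {c : ℝ} (hc : 0 ≤ c) (x : ℝ) : 0 ≤ truncPos c x :=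
  le_min (le_max_right _ _) hc

lemma truncPos_mono (c : ℝ) : Monotone (truncPos c) := fun _ _ h =>
  min_le_min_right _ (max_le_max_right _ h)

lemma abs_truncPos_le {c : ℝ} (hc : 0 ≤ c) (x : ℝ) : |truncPos c x| ≤ min |x| c := by
  rw [abs_of_nonneg (truncPos_nonneg hc x)]
  exact min_le_min_right _ (max_le (le_abs_self x) (abs_nonneg x))

/-- Doubling the truncation level increases the truncation, and by at most `c`, only
where `|x| > c`. -/
lemma truncPos_double_sub {c x : ℝ} (hc : 0 ≤ c) :
    0 ≤ truncPos (2 * c) x - truncPos c x ∧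
      truncPos (2 * c) x - truncPos c x ≤ if c < |x| then c else 0 := by
  unfold truncPos
  have := le_abs_self x
  rcases le_total x 0 with h0 | h0
  · rw [max_eq_right h0, min_eq_left hc, min_eq_left (by linarith)]
    split_ifs <;> simp [hc]
  · rw [max_eq_left h0, abs_of_nonneg h0]
    split_ifs with h
    · rw [min_eq_right h.le]
      constructor
      · rw [sub_nonneg]; exact le_min h.le (by linarith)
      · linarith [min_le_right x (2 * c)]
    · push Not at h
      rw [min_eq_left h, min_eq_left (by linarith)]
      simp

lemma integral_ite_lt {Ω : Type*} [MeasureSpace Ω] [IsProbabilityMeasure (volume : Measure Ω)]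
    {ξ : Ω → ℝ} (hξ : Measurable ξ) (c : ℝ) :
    Integrable (fun ω => if c < |ξ ω| then c else 0) ∧
    ∫ ω, (if c < |ξ ω| then c else 0) = c * (volume : Measure Ω).real {ω | c < |ξ ω|} := by
  have hs : MeasurableSet {ω | c < |ξ ω|} := measurableSet_lt measurable_const hξ.abs
  have he : (fun ω => if c < |ξ ω| then c else 0) = {ω | c < |ξ ω|}.indicator fun _ => c := by
    ext ω; simp [Set.indicator_apply]
  rw [he]
  refine ⟨(integrable_const _).indicator hs, ?_⟩
  rw [integral_indicator_const _ hs, smul_eq_mul, mul_comm]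

lemma truncPos_integrable {Ω : Type*} [MeasureSpace Ω]
    [IsProbabilityMeasure (volume : Measure Ω)] {ξ : Ω → ℝ} (hξ : Measurable ξ) {c : ℝ}
    (hc : 0 ≤ c) : Integrable fun ω => truncPos c (ξ ω) :=
  Integrable.of_bound ((truncPos_mono c).measurable.comp hξ).aestronglyMeasurable c
    (ae_of_all _ fun _ => (abs_truncPos_le hc _).trans (min_le_right _ _))

/-- Maximal inequality for the centred truncated positive parts (`θ = 1`) or negative parts
(`θ = -1`) of the array: the `r`-th level of `rectangle_mean` is the truncation at `b / 2 ^ r`. -/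
lemma one_sided_mean {Ω : Type*} [MeasureSpace Ω] [IsProbabilityMeasure (volume : Measure Ω)]
    {ξ : ℕ → ℕ → Ω → ℝ} (hξ : ∀ i j, Measurable (ξ i j)) {C : ℝ} (hC : 0 < C)
    (hvar : ∀ (I : Finset (ℕ × ℕ)) (f : ℝ → ℝ), Monotone f → ∀ c V : ℝ,
      (∀ x, |f x| ≤ min |x| c) → (∀ i j, ∫ ω, (min |ξ i j ω| c) ^ 2 ≤ V) →
      Integrable (fun ω => (∑ x ∈ I, (f (ξ x.1 x.2 ω) - ∫ ω', f (ξ x.1 x.2 ω'))) ^ 2) ∧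
      ∫ ω, (∑ x ∈ I, (f (ξ x.1 x.2 ω) - ∫ ω', f (ξ x.1 x.2 ω'))) ^ 2 ≤ I.card * (C * V))
    {p p' b η γ σ : ℝ} (hp' : p' < 2) (hb : 0 < b) (hη : 0 < η)
    (hγ : 0 < γ) (hσ0 : 0 < σ) (hσ1 : σ < 1) (hσ : σ ^ 2 = (1 / 2) ^ (2 - p'))
    (htail : ∀ i j x, 0 < x → x ≤ b →
      (volume : Measure Ω).real {ω | x < |ξ i j ω|} ≤ η / b ^ p * (b / x) ^ p')
    {s t : ℕ} (hst : (2 : ℝ) ^ (s + t) ≤ 4 * b ^ p) {θ : ℝ} (hθ : θ = 1 ∨ θ = -1)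
    (hγ1 : 4 * η ≤ γ) (hγ2 : 4 * C * η * (1 / (1 - p' / 2)) ≤ γ ^ 2) :
    SupMeanLE volume (fun x : ℕ × ℕ => x.1 ≤ 2 ^ s ∧ x.2 ≤ 2 ^ t)
      (fun x ω => ∑ i ∈ Finset.range x.1, ∑ j ∈ Finset.range x.2,
        (truncPos b (θ * ξ i j ω) - ∫ ω', truncPos b (θ * ξ i j ω')))
      (96 / (1 - σ) ^ 2 * (γ * b)) := by
  have hκ : 0 < 1 / (1 - p' / 2) := by
    have : 0 < 1 - p' / 2 := by linarith
    positivity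
  have hbp : 0 < b ^ p := by positivity
  have hcpos : ∀ r : ℕ, 0 < b / 2 ^ r := fun r => by positivity
  have hcle : ∀ r : ℕ, b / 2 ^ r ≤ b := fun r =>
    div_le_self hb.le (one_le_pow₀ (by norm_num))
  have hθabs : ∀ x, |θ * x| = |x| := fun x => by rcases hθ with rfl | rfl <;> simp
  have hθsq : θ * θ = 1 := by rcases hθ with rfl | rfl <;> norm_num
  -- `2 ^ p' = 4 σ ^ 2`, so all powers of `b / (b / 2 ^ r)` become powers of `σ`
  have h2p : (2 : ℝ) ^ p' = 4 * σ ^ 2 := by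
    rw [hσ, one_div, Real.inv_rpow (by norm_num), ← Real.rpow_neg (by norm_num),
      show (4 : ℝ) = 2 ^ (2 : ℝ) by norm_num, ← Real.rpow_add (by norm_num)]
    congr 1; ring
  have hratio : ∀ r : ℕ, (b / (b / 2 ^ r)) ^ p' = (4 * σ ^ 2) ^ r := fun r => by
    rw [div_div_cancel₀ hb.ne', ← h2p, ← Real.rpow_natCast, ← Real.rpow_natCast,
      ← Real.rpow_mul (by norm_num), ← Real.rpow_mul (by norm_num), mul_comm]
  have hratio' : ∀ r : ℕ, (b / 2 ^ r / b) ^ (2 - p') = (σ ^ 2) ^ r := fun r => by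
    have : b / 2 ^ r / b = (1 / 2) ^ r := by rw [one_div, inv_pow]; field_simp
    rw [this, hσ, ← Real.rpow_natCast, ← Real.rpow_natCast,
      ← Real.rpow_mul (by norm_num), ← Real.rpow_mul (by norm_num), mul_comm]
  set q : ℕ → ℝ := fun r => b / 2 ^ r * (η / b ^ p * (4 * σ ^ 2) ^ r) with hq
  have hmθ : ∀ i j, Measurable fun ω => θ * ξ i j ω := fun i j => (hξ i j).const_mul θ
  have main := rectangle_mean (volume : Measure Ω)
    (fun r i j ω => truncPos (b / 2 ^ r) (θ * ξ i j ω) -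
      ∫ ω', truncPos (b / 2 ^ r) (θ * ξ i j ω')) q (g := γ * b) (σ := σ) (by positivity)
    hσ0 hσ1 (s := s) (t := t) (fun r => by positivity) ?_ ?_ ?_
  · simpa using main
  · intro r i j ω
    have hc2 : b / 2 ^ r = 2 * (b / 2 ^ (r + 1)) := by rw [pow_succ]; field_simp
    have hint := truncPos_integrable (hmθ i j) (hcpos r).le
    have hint' := truncPos_integrable (hmθ i j) (hcpos (r + 1)).le
    have h1 := (truncPos_double_sub (x := θ * ξ i j ω) (hcpos (r + 1)).le).1
    have h2 : (∫ ω', truncPos (b / 2 ^ r) (θ * ξ i j ω')) -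
        ∫ ω', truncPos (b / 2 ^ (r + 1)) (θ * ξ i j ω') ≤ q (r + 1) := by
      rw [← integral_sub hint hint']
      obtain ⟨hi, he⟩ := integral_ite_lt (hξ i j) (b / 2 ^ (r + 1))
      calc _ ≤ ∫ ω, (if b / 2 ^ (r + 1) < |ξ i j ω| then b / 2 ^ (r + 1) else 0) := by
            refine integral_mono (hint.sub hint') hi fun ω => ?_
            have := (truncPos_double_sub (x := θ * ξ i j ω) (hcpos (r + 1)).le).2
            rw [hθabs, ← hc2] at this
            exact this
        _ ≤ q (r + 1) := by
            rw [he]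
            have := htail i j _ (hcpos (r + 1)) (hcle (r + 1))
            rw [hratio] at this
            exact mul_le_mul_of_nonneg_left this (hcpos (r + 1)).le
    rw [← hc2] at h1
    linarith
  · intro r I
    set f : ℝ → ℝ := fun x => θ * truncPos (b / 2 ^ r) (θ * x) with hf
    have hfm : Monotone f := by
      intro x y hxy
      rcases hθ with h | h
      · simp only [hf, h, one_mul]
        exact truncPos_mono _ hxy
      · simp only [hf, h, neg_mul, one_mul]
        exact neg_le_neg (truncPos_mono _ (neg_le_neg hxy))
    have hV : ∀ i j, ∫ ω, (min |ξ i j ω| (b / 2 ^ r)) ^ 2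
        ≤ η / b ^ p * (1 / (1 - p' / 2)) * b ^ 2 * (σ ^ 2) ^ r := fun i j => by
      rw [← hratio' r]
      exact second_moment_le (hξ i j) (hcpos r) (hcle r) hp' (htail i j)
    obtain ⟨hi, hle⟩ := hvar I f hfm (b / 2 ^ r) _ (fun x => by
      rw [hf, hθabs, ← hθabs x]; exact abs_truncPos_le (hcpos r).le _) hV
    -- the sign `θ` disappears after squaring
    have hsq : ∀ ω, (∑ x ∈ I, (f (ξ x.1 x.2 ω) - ∫ ω', f (ξ x.1 x.2 ω'))) ^ 2
        = (∑ x ∈ I, (truncPos (b / 2 ^ r) (θ * ξ x.1 x.2 ω) -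
          ∫ ω', truncPos (b / 2 ^ r) (θ * ξ x.1 x.2 ω'))) ^ 2 := fun ω => by
      simp only [hf, integral_const_mul, ← mul_sub, ← Finset.mul_sum, mul_pow]
      rw [pow_two θ, hθsq, one_mul]
    simp only [hsq] at hi hle
    refine ⟨hi, ?_⟩
    calc _ ≤ 2 ^ (s + t) *
          (I.card * (C * (η / b ^ p * (1 / (1 - p' / 2)) * b ^ 2 * (σ ^ 2) ^ r))) := by gcongr
      _ ≤ (4 * b ^ p) *
          (I.card * (C * (η / b ^ p * (1 / (1 - p' / 2)) * b ^ 2 * (σ ^ 2) ^ r))) := by gcongr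
      _ = I.card * ((4 * C * η * (1 / (1 - p' / 2))) * (b * σ ^ r) ^ 2) := by
          rw [← pow_mul, mul_comm 2 r, pow_mul]
          generalize 1 / (1 - p' / 2) = κ
          field_simp
      _ ≤ I.card * (γ ^ 2 * (b * σ ^ r) ^ 2) := by gcongr
      _ = _ := by ring
  · intro r
    have h1 : σ ^ r * σ ^ r ≤ σ ^ r :=
      mul_le_of_le_one_left (by positivity) (pow_le_one₀ hσ0.le hσ1.le)
    have h4 : (4 : ℝ) ^ r = 2 ^ r * 2 ^ r := by rw [← mul_pow]; norm_num
    calc (2 : ℝ) ^ (s + t) * q r ≤ (4 * b ^ p) * q r := by gcongr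
      _ = 2 ^ r * ((4 * η) * b * (σ ^ r * σ ^ r)) := by
          simp only [hq, mul_pow, h4]; field_simp; ring
      _ ≤ 2 ^ r * (γ * b * σ ^ r) := by gcongr

/-! ### The weak law -/

/-- The two one-sided truncations recombine to `x` when `|x| ≤ b`. Otherwise they differ from
`x · 1(|x| ≤ b) = 0` by exactly `b`; this accounts for the difference between the two centerings. -/
lemma abs_sub_truncPos_le {b : ℝ} (hb : 0 ≤ b) (x : ℝ) :
    |(if |x| ≤ b then x else 0) - (truncPos b x - truncPos b (-x))| ≤
      if b < |x| then b else 0 := by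
  unfold truncPos
  rcases le_total x 0 with h0 | h0
  · rw [abs_of_nonpos h0, max_eq_right h0, max_eq_left (neg_nonneg.2 h0), min_eq_left hb]
    split_ifs with h1 h2 h2
    · linarith
    · rw [min_eq_left h1]; simp
    · rw [min_eq_right h2.le]; simp [abs_of_nonneg hb]
    · exact absurd (not_le.1 h1) h2
  · rw [abs_of_nonneg h0, max_eq_left h0, max_eq_right (neg_nonpos.2 h0), min_eq_left hb]
    split_ifs with h1 h2 h2
    · linarith
    · rw [min_eq_left h1]; simp
    · rw [min_eq_right h2.le]; simp [abs_of_nonneg hb]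
    · exact absurd (not_le.1 h1) h2

lemma sum_Icc_one (f : ℕ → ℝ) (u : ℕ) :
    ∑ i ∈ Finset.Icc 1 u, f i = ∑ i ∈ Finset.range u, f (i + 1) := by
  induction u with
  | zero => simp
  | succ k ih => rw [Finset.sum_Icc_succ_top (by omega), Finset.sum_range_succ, ih]

lemma maxDS_le {f : ℕ → ℕ → ℝ} {m n : ℕ} {c : ℝ} (hc : 0 ≤ c)
    (h : ∀ u v, u ≤ m → v ≤ n →
      |∑ i ∈ Finset.range u, ∑ j ∈ Finset.range v, f (i + 1) (j + 1)| ≤ c) :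
    maxDS f m n ≤ c := by
  unfold maxDS maxNN
  rw [← Real.coe_toNNReal c hc, NNReal.coe_le_coe]
  refine Finset.sup_le fun x hx => Real.toNNReal_le_toNNReal ?_
  simp only [Finset.mem_product, Finset.mem_Icc] at hx
  have := h x.1 x.2 hx.1.2 hx.2.2
  simpa only [sum_Icc_one] using this

lemma exists_dyadic {m : ℕ} (hm : 1 ≤ m) : ∃ s, m ≤ 2 ^ s ∧ 2 ^ s ≤ 2 * m := by
  refine ⟨Nat.log 2 m + 1, (Nat.lt_pow_succ_log_self (by norm_num) m).le, ?_⟩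
  rw [pow_succ, mul_comm]
  exact Nat.mul_le_mul_left 2 (Nat.pow_log_le_self 2 (by omega))

/-- Away from the event that some variable in the rectangle exceeds `b`, the partial sums centred
at `E ξ 1(|ξ| ≤ b)` are controlled by the two one-sided sums, up to the total centering error
`m n η b ≤ A b`. -/
lemma partial_sum_le {Ω : Type*} [MeasureSpace Ω] [IsProbabilityMeasure (volume : Measure Ω)]
    {ξ : ℕ → ℕ → Ω → ℝ} (hξ : ∀ i j, Measurable (ξ i j)) {b η A : ℝ} (hb : 0 < b)
    {m n : ℕ} (hη : 0 ≤ η) (hmn : (m : ℝ) * n * η ≤ A)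
    (htail : ∀ i j, (volume : Measure Ω).real {ω | b < |ξ i j ω|} ≤ η)
    {ω : Ω} (hω : ∀ i < m, ∀ j < n, |ξ i j ω| ≤ b) {g₁ g₂ : ℝ}
    (h₁ : ∀ u v, u ≤ m → v ≤ n → |∑ i ∈ Finset.range u, ∑ j ∈ Finset.range v,
      (truncPos b (1 * ξ i j ω) - ∫ ω', truncPos b (1 * ξ i j ω'))| ≤ g₁)
    (h₂ : ∀ u v, u ≤ m → v ≤ n → |∑ i ∈ Finset.range u, ∑ j ∈ Finset.range v,
      (truncPos b (-1 * ξ i j ω) - ∫ ω', truncPos b (-1 * ξ i j ω'))| ≤ g₂)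
    {u v : ℕ} (hu : u ≤ m) (hv : v ≤ n) :
    |∑ i ∈ Finset.range u, ∑ j ∈ Finset.range v,
      (ξ i j ω - ∫ ω', (if |ξ i j ω'| ≤ b then ξ i j ω' else 0))| ≤ g₁ + g₂ + A * b := by
  set e : ℕ → ℕ → ℝ := fun i j => ∫ ω', (if |ξ i j ω'| ≤ b then ξ i j ω' else 0) with he
  set e₁ : ℕ → ℕ → ℝ := fun i j => ∫ ω', truncPos b (1 * ξ i j ω') with he₁
  set e₂ : ℕ → ℕ → ℝ := fun i j => ∫ ω', truncPos b (-1 * ξ i j ω') with he₂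
  have hdiff : ∀ i j, |e i j - (e₁ i j - e₂ i j)| ≤ b * η := fun i j => by
    have i₁ := truncPos_integrable ((hξ i j).const_mul 1) hb.le
    have i₂ := truncPos_integrable ((hξ i j).const_mul (-1)) hb.le
    have i₀ : Integrable fun ω' => if |ξ i j ω'| ≤ b then ξ i j ω' else 0 := by
      refine Integrable.of_bound (Measurable.ite (measurableSet_le (hξ i j).abs measurable_const)
        (hξ i j) measurable_const).aestronglyMeasurable b (ae_of_all _ fun ω' => ?_)
      split_ifs with h
      · exact h
      · simpa using hb.le
    have i₃ : Integrable fun ω' => truncPos b (1 * ξ i j ω') - truncPos b (-1 * ξ i j ω') :=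
      i₁.sub i₂
    obtain ⟨hi, hie⟩ := integral_ite_lt (hξ i j) b
    simp only [he, he₁, he₂]
    rw [← integral_sub i₁ i₂, ← integral_sub i₀ i₃]
    refine (abs_integral_le_integral_abs).trans ?_
    calc _ ≤ ∫ ω', (if b < |ξ i j ω'| then b else 0) := by
          refine integral_mono (i₀.sub i₃).abs hi fun ω' => ?_
          simpa using abs_sub_truncPos_le hb.le (ξ i j ω')
      _ ≤ b * η := by rw [hie]; exact mul_le_mul_of_nonneg_left (htail i j) hb.le
  have hsplit : ∑ i ∈ Finset.range u, ∑ j ∈ Finset.range v, (ξ i j ω - e i j) =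
      ∑ i ∈ Finset.range u, ∑ j ∈ Finset.range v, (truncPos b (1 * ξ i j ω) - e₁ i j) -
      ∑ i ∈ Finset.range u, ∑ j ∈ Finset.range v, (truncPos b (-1 * ξ i j ω) - e₂ i j) -
      ∑ i ∈ Finset.range u, ∑ j ∈ Finset.range v, (e i j - (e₁ i j - e₂ i j)) := by
    simp only [← Finset.sum_sub_distrib]
    refine Finset.sum_congr rfl fun i hi => Finset.sum_congr rfl fun j hj => ?_
    have hle := hω i ((Finset.mem_range.1 hi).trans_le hu) j ((Finset.mem_range.1 hj).trans_le hv)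
    have := abs_sub_truncPos_le hb.le (ξ i j ω)
    rw [if_pos hle, if_neg (not_lt.2 hle)] at this
    have h0 := abs_nonpos_iff.1 this
    rw [one_mul, neg_one_mul]
    linarith
  have herr : |∑ i ∈ Finset.range u, ∑ j ∈ Finset.range v, (e i j - (e₁ i j - e₂ i j))|
      ≤ A * b := by
    calc _ ≤ ∑ i ∈ Finset.range u, ∑ j ∈ Finset.range v, b * η :=
          (Finset.abs_sum_le_sum_abs _ _).trans (Finset.sum_le_sum fun i _ =>
            (Finset.abs_sum_le_sum_abs _ _).trans (Finset.sum_le_sum fun j _ => hdiff i j))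
      _ = (u : ℝ) * v * η * b := by simp; ring
      _ ≤ (m : ℝ) * n * η * b := by gcongr
      _ ≤ A * b := by gcongr
  rw [hsplit]
  exact (abs_sub _ _).trans (add_le_add ((abs_sub _ _).trans
    (add_le_add (h₁ u v hu hv) (h₂ u v hu hv))) herr)

/-- Union bound for the event that some `|ξ i j|` exceeds `b`, and Markov's inequality for `G`
on the complement. -/
lemma prob_le {Ω : Type*} [MeasureSpace Ω] [IsProbabilityMeasure (volume : Measure Ω)]
    {ξ : ℕ → ℕ → Ω → ℝ} {b η x δ ε a : ℝ} {m n : ℕ} {G : Ω → ℝ}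
    (hη : (m : ℝ) * n * η ≤ δ / 2)
    (htail : ∀ i j, (volume : Measure Ω).real {ω | b < |ξ i j ω|} ≤ η)
    (hG : Integrable G) (hG0 : ∀ ω, 0 ≤ G ω) (hGx : ∫ ω, G ω ≤ x) (ha : 0 < a)
    (hxa : x ≤ δ / 2 * a) {M : Ω → ℝ}
    (hM : ∀ ω, (∀ i < m, ∀ j < n, |ξ i j ω| ≤ b) → ε < M ω → a ≤ G ω) :
    (volume {ω | ε < M ω}).toReal ≤ δ := by
  set E : Set Ω := ⋃ x ∈ Finset.range m ×ˢ Finset.range n, {ω | b < |ξ x.1 x.2 ω|} with hE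
  have hsub : {ω | ε < M ω} ⊆ E ∪ {ω | a ≤ G ω} := by
    intro ω hω
    by_cases h : ω ∈ E
    · exact Or.inl h
    · refine Or.inr (hM ω (fun i hi j hj => ?_) hω)
      by_contra hlt
      refine h (Set.mem_biUnion (x := (i, j)) ?_ (not_le.1 hlt))
      simp [hi, hj]
  have h1 : (volume : Measure Ω).real E ≤ δ / 2 := by
    calc _ ≤ ∑ x ∈ Finset.range m ×ˢ Finset.range n,
          (volume : Measure Ω).real {ω | b < |ξ x.1 x.2 ω|} :=
          measureReal_biUnion_finset_le _ _
      _ ≤ ∑ x ∈ Finset.range m ×ˢ Finset.range n, η :=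
          Finset.sum_le_sum fun x _ => htail x.1 x.2
      _ = (m : ℝ) * n * η := by simp
      _ ≤ _ := hη
  have h2 : (volume : Measure Ω).real {ω | a ≤ G ω} ≤ δ / 2 := by
    have := mul_meas_ge_le_integral_of_nonneg (ae_of_all _ hG0) hG a
    have h3 : a * (volume : Measure Ω).real {ω | a ≤ G ω} ≤ a * (δ / 2) := by
      refine this.trans (hGx.trans ?_)
      rw [mul_comm a]
      exact hxa
    exact le_of_mul_le_mul_left h3 ha
  calc (volume : Measure Ω).real {ω | ε < M ω} ≤ (volume : Measure Ω).real (E ∪ _) :=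
        measureReal_mono hsub
    _ ≤ _ := measureReal_union_le _ _
    _ ≤ δ := by linarith

/-- Feller weak law of large numbers for the maximum of double sums of dependent
random variables (sufficiency part). -/
theorem feller_wlln_dependent_fields
    {Ω : Type*} [MeasureSpace Ω] [IsProbabilityMeasure (volume : Measure Ω)]
    (p : ℝ) (hp1 : 1 ≤ p) (hp2 : p < 2)
    (X : ℕ → ℕ → Ω → ℝ)
    (hmeas : ∀ m n : ℕ, 1 ≤ m → 1 ≤ n → Measurable (X m n))
    (hH : CondH 1 fun k : PIdx => X k.1.1 k.1.2)
    (Y : Ω → ℝ) (hYmeas : Measurable Y)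
    (hdom : StochDom (fun k : PIdx => X k.1.1 k.1.2) Y)
    (hY : Tendsto (fun n : ℕ => (n : ℝ) * (volume {ω | (n : ℝ) ^ (1 / p) < |Y ω|}).toReal)
      atTop (nhds 0)) :
    ∀ ε : ℝ, 0 < ε → ∀ δ : ℝ, 0 < δ → ∃ N : ℕ, ∀ m n : ℕ,
      1 ≤ m → 1 ≤ n → N ≤ max m n →
        (volume {ω | ε <
          maxDS (fun i j => X i j ω -
              ∫ ω', (if |X i j ω'| ≤ ((m * n : ℕ) : ℝ) ^ (1 / p) then X i j ω' else 0)) m n /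
            ((m * n : ℕ) : ℝ) ^ (1 / p)}).toReal ≤ δ := by
  intro ε hε δ hδ
  have hp0 : 0 < p := by linarith
  -- an exponent strictly between `p` and `2`, and the resulting geometric ratio
  set p' : ℝ := (p + 2) / 2 with hp'
  have hpp' : p < p' := by rw [hp']; linarith
  have hp'2 : p' < 2 := by rw [hp']; linarith
  set σ : ℝ := (1 / 2) ^ ((2 - p') / 2) with hσdef
  have hσ0 : 0 < σ := by positivity
  have hσ1 : σ < 1 := Real.rpow_lt_one (by norm_num) (by norm_num) (by linarith)
  have hσ : σ ^ 2 = (1 / 2) ^ (2 - p') := by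
    rw [hσdef, ← Real.rpow_natCast, ← Real.rpow_mul (by norm_num)]
    congr 1; push_cast; ring
  obtain ⟨C, hC, hvar⟩ := variance_bound hmeas hH
  set L : ℝ := 96 / (1 - σ) ^ 2 with hL
  have hL0 : 0 < L := by
    have : 0 < 1 - σ := by linarith
    positivity
  set κ : ℝ := 1 / (1 - p' / 2) with hκ
  have hκ0 : 0 < κ := by
    have : 0 < 1 - p' / 2 := by linarith
    positivity
  -- chosen so that Markov's inequality at level `ε b / 2` yields exactly `δ / 2`
  set γ : ℝ := δ * ε / (8 * L) with hγ
  have hγ0 : 0 < γ := by positivity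
  obtain ⟨η, hη0, hη1, hη2, hη3, hη4⟩ : ∃ η : ℝ, 0 < η ∧ η ≤ ε / 2 ∧ η ≤ δ / 2 ∧ 4 * η ≤ γ ∧
      4 * C * η * κ ≤ γ ^ 2 := by
    refine ⟨min (min (ε / 2) (δ / 2)) (min (γ / 4) (γ ^ 2 / (4 * C * κ))), ?_, ?_, ?_, ?_, ?_⟩
    · positivity
    · exact (min_le_left _ _).trans (min_le_left _ _)
    · exact (min_le_left _ _).trans (min_le_right _ _)
    · have := (min_le_right (min (ε / 2) (δ / 2)) _).trans
        (min_le_left (γ / 4) (γ ^ 2 / (4 * C * κ)))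
      linarith
    · have := (min_le_right (min (ε / 2) (δ / 2)) _).trans
        (min_le_right (γ / 4) (γ ^ 2 / (4 * C * κ)))
      rw [le_div_iff₀ (by positivity)] at this
      linarith
  obtain ⟨B, hB, htailY⟩ := tail_bound hp1 hpp' Y hY hη0
  -- since `m * n ≥ max m n`, this threshold gives `b ≥ B`
  refine ⟨⌈B ^ p⌉₊, fun m n hm hn hN => ?_⟩
  have hKN : max m n ≤ m * n := max_le (Nat.le_mul_of_pos_right m hn) (Nat.le_mul_of_pos_left n hm)
  have hK0 : (0 : ℝ) < ((m * n : ℕ) : ℝ) := by exact_mod_cast Nat.mul_pos hm hn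
  set b : ℝ := ((m * n : ℕ) : ℝ) ^ (1 / p) with hb
  have hb0 : 0 < b := by positivity
  have hbp : b ^ p = (m : ℝ) * n := by
    rw [hb, ← Real.rpow_mul hK0.le, one_div_mul_cancel hp0.ne', Real.rpow_one]
    push_cast; rfl
  have hBb : B ≤ b := by
    have h1 : B ^ p ≤ ((m * n : ℕ) : ℝ) :=
      (Nat.le_ceil _).trans (by exact_mod_cast hN.trans hKN)
    calc B = (B ^ p) ^ (1 / p) := by
          rw [← Real.rpow_mul hB.le, mul_one_div_cancel hp0.ne', Real.rpow_one]
      _ ≤ b := Real.rpow_le_rpow (by positivity) h1 (by positivity)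
  obtain ⟨s, hs1, hs2⟩ := exists_dyadic hm
  obtain ⟨t, ht1, ht2⟩ := exists_dyadic hn
  have hst : (2 : ℝ) ^ (s + t) ≤ 4 * b ^ p := by
    rw [hbp, pow_add]
    have h1 : (2 : ℝ) ^ s ≤ 2 * m := by exact_mod_cast hs2
    have h2 : (2 : ℝ) ^ t ≤ 2 * n := by exact_mod_cast ht2
    calc (2 : ℝ) ^ s * 2 ^ t ≤ (2 * m) * (2 * n) := by gcongr
      _ = _ := by ring
  set ξ : ℕ → ℕ → Ω → ℝ := fun i j => X (i + 1) (j + 1) with hξ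
  have hξm : ∀ i j, Measurable (ξ i j) := fun i j => hmeas _ _ (by omega) (by omega)
  have htail : ∀ i j x, 0 < x → x ≤ b →
      (volume : Measure Ω).real {ω | x < |ξ i j ω|} ≤ η / b ^ p * (b / x) ^ p' :=
    fun i j x hx hxb => (ENNReal.toReal_mono (measure_ne_top _ _)
      (hdom x ⟨(i + 1, j + 1), by simp⟩)).trans (htailY b hBb x hx hxb)
  have htailb : ∀ i j, (volume : Measure Ω).real {ω | b < |ξ i j ω|} ≤ η / b ^ p := fun i j => by
    have := htail i j b hb0 le_rfl
    rwa [div_self hb0.ne', Real.one_rpow, mul_one] at this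
  have hmn : (m : ℝ) * n * (η / b ^ p) = η := by
    rw [← hbp]; field_simp
  -- majorants for the positive and for the negative parts
  obtain ⟨G₁, hG₁i, hG₁, hG₁x⟩ := one_sided_mean hξm hC hvar hp'2 hb0 hη0 hγ0 hσ0 hσ1 hσ htail
    hst (Or.inl rfl) hη3 hη4
  obtain ⟨G₂, hG₂i, hG₂, hG₂x⟩ := one_sided_mean hξm hC hvar hp'2 hb0 hη0 hγ0 hσ0 hσ1 hσ htail
    hst (Or.inr rfl) hη3 hη4
  have hG₁0 : ∀ ω, 0 ≤ G₁ ω := fun ω => (abs_nonneg _).trans (hG₁ (0, 0) (by simp) ω)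
  have hG₂0 : ∀ ω, 0 ≤ G₂ ω := fun ω => (abs_nonneg _).trans (hG₂ (0, 0) (by simp) ω)
  refine prob_le (ξ := ξ) (b := b) (η := η / b ^ p) (m := m) (n := n)
    (G := fun ω => G₁ ω + G₂ ω) (a := ε / 2 * b) (x := L * (γ * b) + L * (γ * b))
    (by rw [hmn]; exact hη2) htailb (hG₁i.add hG₂i) (fun ω => add_nonneg (hG₁0 ω) (hG₂0 ω))
    (by rw [integral_add hG₁i hG₂i]; exact add_le_add hG₁x hG₂x) (by positivity)
    (by rw [hγ]; field_simp; norm_num) fun ω hω hlt => ?_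
  rw [lt_div_iff₀ hb0] at hlt
  have hmax : maxDS (fun i j => X i j ω - ∫ ω', (if |X i j ω'| ≤ b then X i j ω' else 0)) m n
      ≤ G₁ ω + G₂ ω + η * b := by
    refine maxDS_le (by have := hG₁0 ω; have := hG₂0 ω; positivity) fun u v hu hv => ?_
    exact partial_sum_le hξm hb0 (by positivity) hmn.le htailb hω
      (fun u v hu hv => hG₁ (u, v) ⟨hu.trans hs1, hv.trans ht1⟩ ω)
      (fun u v hu hv => hG₂ (u, v) ⟨hu.trans hs1, hv.trans ht1⟩ ω) hu hv
  have : η * b ≤ ε / 2 * b := by gcongr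
  linarith
end
end

section
/- Let 1 ≤ p < 2 and let {X_{m,n} : m ≥ 1, n ≥ 1} be a double array of random variables satisfying Condition (H_2), where the X_{m,n} are symmetric and all have the same distribution as a random variable X. If max_{u≤m, v≤n} |∑_{i=1}^{u} ∑_{j=1}^{v} X_{i,j}| / (mn)^{1/p} → 0 in probability as max(m, n) → ∞, then n · P(|X| > n^{1/p}) → 0 as n → ∞. -/
/-!
The first row of the array already forces the conclusion. Put `b = n ^ (1 / p)` and let `N` be the
number of `j ≤ n` with `X 1 j > b`, so `μ = E N = n P(Y > b)`. Indicators `1(x > b)` are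
nondecreasing, so Condition (H_2) gives `Var N ≤ 2 C μ`. On the other hand `N > 0` forces one of
the partial sums of the row to exceed `b / 2` in absolute value (a summand is the difference of two
consecutive partial sums), an event of probability at most `δ` for large `n`. By the second-moment
inequality `μ² ≤ E N² · P(N > 0)` it follows that
`μ² ≤ (2 C μ + μ²) δ`, hence `μ ≤ 4 |C| δ` for `δ ≤ 1 / 2`
(`le_of_second_moment`). Symmetry doubles this into a bound on `n P(|Y| > b)`.
-/

open MeasureTheory ProbabilityTheory Finset Filter
open scoped NNReal ENNReal

noncomputable section

/-! ### The second-moment inequality -/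

/-- Second-moment (Paley–Zygmund type) bound: a variable that vanishes outside an event of
probability at most `δ` and whose variance is at most `K` times its mean has mean at most
`2 K δ`. -/
theorem le_of_second_moment {Ω : Type*} [MeasureSpace Ω]
    [IsProbabilityMeasure (volume : Measure Ω)] (N : Ω → ℝ) (μ K δ : ℝ) (B : Set Ω)
    (hN : Integrable N) (hN2 : Integrable fun ω => (N ω - μ) ^ 2) (hμ : ∫ ω, N ω = μ)
    (hμ0 : 0 ≤ μ) (hK : 0 ≤ K) (hB : MeasurableSet B) (hNB : ∀ ω, ω ∉ B → N ω = 0)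
    (hδ : 0 < δ) (hδ2 : δ ≤ 1 / 2) (hBδ : (volume B).toReal ≤ δ)
    (hvar : ∫ ω, (N ω - μ) ^ 2 ≤ K * μ) : μ ≤ 2 * K * δ := by
  rcases hμ0.eq_or_lt with h0 | hpos
  · rw [← h0]; positivity
  -- `t = μ / δ` optimizes the bound coming from `0 ≤ (N - t 1_B)²`.
  obtain ⟨t, ht⟩ : ∃ t, t = μ / δ := ⟨_, rfl⟩
  have hBi : Integrable (B.indicator fun _ => (1 : ℝ)) :=
    (integrable_const (1 : ℝ)).indicator hB
  have hint : Integrable fun ω =>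
      (2 * (t - μ)) * N ω - t ^ 2 * B.indicator (fun _ => (1 : ℝ)) ω + μ ^ 2 :=
    ((hN.const_mul _).sub (hBi.const_mul _)).add (integrable_const _)
  have hle : ∫ ω, ((2 * (t - μ)) * N ω - t ^ 2 * B.indicator (fun _ => (1 : ℝ)) ω + μ ^ 2)
      ≤ ∫ ω, (N ω - μ) ^ 2 := by
    apply integral_mono hint hN2
    intro ω
    by_cases hω : ω ∈ B
    · simp only [Set.indicator_of_mem hω]
      nlinarith [sq_nonneg (N ω - t)]
    · simp only [Set.indicator_of_notMem hω, hNB ω hω]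
      nlinarith
  have hIB : ∫ ω, B.indicator (fun _ => (1 : ℝ)) ω = (volume B).toReal := by
    rw [integral_indicator hB]; simp [Measure.real]
  have hsplit : ∫ ω, ((2 * (t - μ)) * N ω - t ^ 2 * B.indicator (fun _ => (1 : ℝ)) ω)
      = 2 * (t - μ) * μ - t ^ 2 * (volume B).toReal := by
    rw [integral_sub (hN.const_mul _) (hBi.const_mul _), integral_const_mul, integral_const_mul,
      hμ, hIB]
  have hint' : Integrable fun ω =>
      (2 * (t - μ)) * N ω - t ^ 2 * B.indicator (fun _ => (1 : ℝ)) ω :=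
    (hN.const_mul _).sub (hBi.const_mul _)
  rw [integral_add hint' (integrable_const _), hsplit] at hle
  simp only [integral_const, probReal_univ, smul_eq_mul, one_mul] at hle
  have h1 : t ^ 2 * (volume B).toReal ≤ t ^ 2 * δ := by gcongr
  have htδ : t * δ = μ := by rw [ht]; field_simp
  have h2 : t ^ 2 * δ = t * μ := by rw [← htδ]; ring
  have h3 : t * μ - μ ^ 2 ≤ K * μ := by nlinarith
  have h4 : t - μ ≤ K := by
    by_contra hc
    push Not at hc
    nlinarith
  have h5 : μ - μ * δ ≤ K * δ := by
    have := mul_le_mul_of_nonneg_right h4 hδ.le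
    rw [sub_mul, htδ] at this
    exact this
  nlinarith

/-! ### Partial sums of the first row -/

/-- Partial sums along the first row are bounded by `maxDS f 1 n`. -/
theorem abs_row_sum_le_maxDS (f : ℕ → ℕ → ℝ) (n v : ℕ) (hv1 : 1 ≤ v) (hv : v ≤ n) :
    |∑ j ∈ Finset.Icc 1 v, f 1 j| ≤ maxDS f 1 n := by
  unfold maxDS maxNN
  have := Finset.le_sup (f := fun q : ℕ × ℕ =>
    Real.toNNReal |∑ i ∈ Finset.Icc 1 q.1, ∑ j ∈ Finset.Icc 1 q.2, f i j|)
    (s := Finset.Icc 1 1 ×ˢ Finset.Icc 1 n) (b := (1, v)) (by simp [hv1, hv])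
  have h2 := NNReal.coe_le_coe.2 this
  simpa [Real.coe_toNNReal] using h2

/-- A summand of the first row is the difference of two consecutive partial sums. -/
theorem abs_row_le_two_mul_maxDS (f : ℕ → ℕ → ℝ) (n j : ℕ) (hj : j < n) :
    |f 1 (j + 1)| ≤ 2 * maxDS f 1 n := by
  have h1 := abs_row_sum_le_maxDS f n (j + 1) (by omega) (by omega)
  rcases Nat.eq_zero_or_pos j with rfl | hj0
  · simp at h1
    have := abs_nonneg (f 1 1)
    simp only [zero_add]
    linarith
  · have h2 := abs_row_sum_le_maxDS f n j hj0 hj.le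
    rw [Finset.sum_Icc_succ_top (by omega)] at h1
    rw [abs_le] at *
    constructor <;> linarith [h1.1, h1.2, h2.1, h2.2]

/-! ### Counting exceedances in the first row -/

/-- The second-moment bound applied to the number of `j ≤ n` with `X 1 j > b`: under
Condition (H_2), if that number vanishes outside an event of probability at most `δ`, then its
mean `n P(Y > b)` is at most `4 |C| δ`. -/
theorem mean_exceedances_le {Ω : Type*} [MeasureSpace Ω]
    [IsProbabilityMeasure (volume : Measure Ω)]
    (X : ℕ → ℕ → Ω → ℝ)
    (hmeas : ∀ m n : ℕ, 1 ≤ m → 1 ≤ n → Measurable (X m n)) (C : ℝ)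
    (hH : CondHWith 1 C fun k : PIdx => X k.1.1 k.1.2)
    (Y : Ω → ℝ) (hid : ∀ m n : ℕ, 1 ≤ m → 1 ≤ n → IdentDistrib (X m n) Y)
    (n : ℕ) (hn : 1 ≤ n) (b δ : ℝ) (hδ : 0 < δ) (hδ2 : δ ≤ 1 / 2)
    (hB : (volume {ω | ∃ j < n, b < X 1 (j + 1) ω}).toReal ≤ δ) :
    (n : ℝ) * (volume {ω | b < Y ω}).toReal ≤ 4 * |C| * δ := by
  obtain ⟨P, hP⟩ : ∃ P, P = (volume {ω | b < Y ω}).toReal := ⟨_, rfl⟩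
  obtain ⟨g, hg⟩ : ∃ g : ℝ → ℝ, g = fun x => if b < x then 1 else 0 := ⟨_, rfl⟩
  have hgmono : Monotone g := by
    intro x y hxy
    simp only [hg]
    split_ifs with h1 h2 h2
    · exact le_rfl
    · exact absurd (h1.trans_le hxy) h2
    · exact zero_le_one
    · exact le_rfl
  have hgmeas : Measurable g := hgmono.measurable
  have hgbd : ∀ x, ‖g x‖ ≤ 1 := by
    intro x; simp only [hg]; split_ifs <;> simp
  have hgsq : ∀ x, g x ^ 2 = g x := by
    intro x; simp only [hg]; split_ifs <;> simp
  have hX : ∀ j, Measurable (X 1 (j + 1)) := fun j => hmeas 1 (j + 1) le_rfl (by omega)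
  have hgi : ∀ j, Integrable fun ω => g (X 1 (j + 1) ω) := fun j =>
    Integrable.of_bound (hgmeas.comp (hX j)).aestronglyMeasurable 1
      (Eventually.of_forall fun ω => hgbd _)
  have hgP : ∀ j, ∫ ω, g (X 1 (j + 1) ω) = P := by
    intro j
    have hm : MeasurableSet {ω | b < X 1 (j + 1) ω} := hX j measurableSet_Ioi
    have he : (fun ω => g (X 1 (j + 1) ω))
        = {ω | b < X 1 (j + 1) ω}.indicator (fun _ => (1 : ℝ)) := by
      funext ω; simp [hg, Set.indicator_apply]
    rw [he, integral_indicator hm, hP]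
    have := (hid 1 (j + 1) le_rfl (by omega)).measure_mem_eq (measurableSet_Ioi (a := b))
    simp only [Set.preimage, Set.mem_Ioi] at this
    simp [Measure.real, this]
  let e : ℕ ↪ PIdx := ⟨fun j => ⟨(1, j + 1), by simp⟩, by
    intro i j h
    simpa using h⟩
  have hI : ((Finset.range n).map e).Nonempty := by simp; omega
  obtain ⟨N, hN⟩ : ∃ N : Ω → ℝ, N = fun ω => ∑ j ∈ Finset.range n, g (X 1 (j + 1) ω) := ⟨_, rfl⟩
  have hNi : Integrable N := by rw [hN]; exact integrable_finsetSum _ fun j _ => hgi j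
  have hNμ : ∫ ω, N ω = n * P := by
    rw [hN, integral_finsetSum _ fun j _ => hgi j]; simp [hgP]
  have hNm : Measurable N := by
    rw [hN]; exact Finset.measurable_sum _ fun j _ => hgmeas.comp (hX j)
  have hNbd : ∀ ω, ‖N ω‖ ≤ n := by
    intro ω
    rw [hN]
    refine (norm_sum_le _ _).trans ((Finset.sum_le_sum fun j _ => hgbd _).trans ?_)
    simp
  have hN2 : Integrable fun ω => (N ω - n * P) ^ 2 := by
    refine Integrable.of_bound ((hNm.sub_const _).pow_const 2).aestronglyMeasurable
      ((n + ‖(n * P : ℝ)‖) ^ 2) (Eventually.of_forall fun ω => ?_)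
    rw [norm_pow]
    gcongr
    exact (norm_sub_le _ _).trans (by gcongr; exact hNbd ω)
  have hsum : ∀ ω, |∑ l ∈ (Finset.range n).map e,
      (g (X l.1.1 l.1.2 ω) - ∫ ω', g (X l.1.1 l.1.2 ω'))| ^ (2 * (1 : ℝ))
        = (N ω - n * P) ^ 2 := by
    intro ω
    rw [Finset.sum_map]
    have hrow : ∑ j ∈ Finset.range n,
        (g (X (e j).1.1 (e j).1.2 ω) - ∫ ω', g (X (e j).1.1 (e j).1.2 ω')) = N ω - n * P := by
      change ∑ j ∈ Finset.range n, (g (X 1 (j + 1) ω) - ∫ ω', g (X 1 (j + 1) ω')) = _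
      simp only [hgP, Finset.sum_sub_distrib, Finset.sum_const, Finset.card_range, nsmul_eq_mul,
        hN]
    rw [hrow, mul_one, Real.rpow_two, sq_abs]
  have hmem : ∀ l ∈ (Finset.range n).map e, ∃ j, l = e j := by
    intro l hl
    obtain ⟨j, -, rfl⟩ := Finset.mem_map.1 hl
    exact ⟨j, rfl⟩
  have habs : ∀ x, |g x| ^ (2 * (1 : ℝ)) = g x := by
    intro x; rw [mul_one, Real.rpow_two, sq_abs, hgsq]
  have key := hH ((Finset.range n).map e) hI (fun _ => g) (fun _ _ => hgmono)
    (fun l hl => by obtain ⟨j, rfl⟩ := hmem l hl; exact hgi j)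
    (fun l hl => by
      obtain ⟨j, rfl⟩ := hmem l hl
      simp only [hgsq]; exact hgi j)
    (fun l hl => by
      obtain ⟨j, rfl⟩ := hmem l hl
      simp only [habs]; exact hgi j)
    (by simp only [hsum]; exact hN2)
  simp only [hsum, habs, hgsq, Real.rpow_one, Finset.card_map, Finset.card_range] at key
  have hsup : ((Finset.range n).map e).sup' hI (fun l => ∫ ω, g (X l.1.1 l.1.2 ω)) = P := by
    apply le_antisymm
    · apply Finset.sup'_le
      intro l hl
      obtain ⟨j, rfl⟩ := hmem l hl
      exact (hgP j).le
    · have := Finset.le_sup' (s := (Finset.range n).map e)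
        (fun l : PIdx => ∫ ω, g (X l.1.1 l.1.2 ω)) (b := e 0)
        (Finset.mem_map_of_mem e (Finset.mem_range.2 hn))
      exact (hgP 0).symm.le.trans this
  rw [hsup] at key
  have hP0 : 0 ≤ P := by rw [hP]; exact ENNReal.toReal_nonneg
  have hBm : MeasurableSet {ω | ∃ j < n, b < X 1 (j + 1) ω} := by
    have : {ω | ∃ j < n, b < X 1 (j + 1) ω} = ⋃ j < n, {ω | b < X 1 (j + 1) ω} := by
      ext ω; simp
    rw [this]
    exact MeasurableSet.iUnion fun j => MeasurableSet.iUnion fun _ => hX j measurableSet_Ioi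
  have := le_of_second_moment N (n * P) (2 * |C|) δ _ hNi hN2 hNμ (by positivity) (by positivity)
    hBm (by
      intro ω hω
      rw [hN]
      refine Finset.sum_eq_zero fun j hj => ?_
      have : ¬ b < X 1 (j + 1) ω := fun h => hω ⟨j, Finset.mem_range.1 hj, h⟩
      simp [hg, this]) hδ hδ2 hB (by
      have hnP : 0 ≤ (n : ℝ) * P := by positivity
      have := mul_le_mul_of_nonneg_right (le_abs_self C) hnP
      linarith)
  rw [← hP]
  linarith

/-! ### The converse weak law -/

/-- Feller weak law of large numbers for the maximum of double sums of dependent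
random variables (necessity part, symmetric identically distributed case). -/
theorem feller_wlln_dependent_fields_converse
    {Ω : Type*} [MeasureSpace Ω] [IsProbabilityMeasure (volume : Measure Ω)]
    (p : ℝ) (hp1 : 1 ≤ p) (hp2 : p < 2)
    (X : ℕ → ℕ → Ω → ℝ)
    (hmeas : ∀ m n : ℕ, 1 ≤ m → 1 ≤ n → Measurable (X m n))
    (hH : CondH 1 fun k : PIdx => X k.1.1 k.1.2)
    (Y : Ω → ℝ) (hYmeas : Measurable Y)
    (hsym : ∀ m n : ℕ, 1 ≤ m → 1 ≤ n → IdentDistrib (X m n) (fun ω => -X m n ω))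
    (hid : ∀ m n : ℕ, 1 ≤ m → 1 ≤ n → IdentDistrib (X m n) Y)
    (hconv : ∀ ε : ℝ, 0 < ε → ∀ δ : ℝ, 0 < δ → ∃ N : ℕ, ∀ m n : ℕ,
      1 ≤ m → 1 ≤ n → N ≤ max m n →
        (volume {ω | ε <
          maxDS (fun i j => X i j ω) m n / ((m * n : ℕ) : ℝ) ^ (1 / p)}).toReal ≤ δ) :
    Tendsto (fun n : ℕ => (n : ℝ) * (volume {ω | (n : ℝ) ^ (1 / p) < |Y ω|}).toReal)
      atTop (nhds 0) := by
  obtain ⟨C, hC⟩ := hH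
  rw [Metric.tendsto_atTop]
  intro η hη
  obtain ⟨δ, hδ, hδ2, hδη⟩ : ∃ δ : ℝ, 0 < δ ∧ δ ≤ 1 / 2 ∧ 8 * |C| * δ < η := by
    have h0 : 0 < 8 * |C| + 1 := by positivity
    refine ⟨min (1 / 2) (η / (8 * |C| + 1)), by positivity, min_le_left _ _, ?_⟩
    have h1 : min (1 / 2) (η / (8 * |C| + 1)) ≤ η / (8 * |C| + 1) := min_le_right _ _
    have h2 : 0 < min (1 / 2) (η / (8 * |C| + 1)) := by positivity
    rw [le_div_iff₀ h0] at h1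
    linarith
  obtain ⟨N, hN⟩ := hconv (1 / 4) (by norm_num) δ hδ
  refine ⟨max N 1, fun n hn => ?_⟩
  have hn1 : 1 ≤ n := (le_max_right _ _).trans hn
  have hnN : N ≤ max 1 n := (le_max_left _ _).trans (hn.trans (le_max_right _ _))
  have hn0 : (0 : ℝ) < n := by exact_mod_cast hn1
  obtain ⟨b, hb⟩ : ∃ b, b = (n : ℝ) ^ (1 / p) := ⟨_, rfl⟩
  have hb0 : 0 < b := by rw [hb]; positivity
  have hB : (volume {ω | ∃ j < n, b < X 1 (j + 1) ω}).toReal ≤ δ := by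
    refine le_trans (ENNReal.toReal_mono (measure_ne_top _ _) (measure_mono ?_))
      (hN 1 n le_rfl hn1 hnN)
    rintro ω ⟨j, hj, hω⟩
    have h1 := abs_row_le_two_mul_maxDS (fun i j => X i j ω) n j hj
    simp only [Set.mem_ofPred_eq, one_mul]
    rw [← hb, lt_div_iff₀ hb0]
    have := le_abs_self (X 1 (j + 1) ω)
    linarith
  have hmain := mean_exceedances_le X hmeas C hC Y hid n hn1 b δ hδ hδ2 hB
  have hneg : volume {ω | b < -Y ω} = volume {ω | b < Y ω} := by
    have h1 := (hid 1 1 le_rfl le_rfl).measure_mem_eq (measurableSet_Ioi (a := b))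
    have h2 := (hid 1 1 le_rfl le_rfl).measure_mem_eq (measurableSet_Iio (a := -b))
    have h3 := (hsym 1 1 le_rfl le_rfl).measure_mem_eq (measurableSet_Ioi (a := b))
    simp only [Set.preimage, Set.mem_Ioi, Set.mem_Iio] at h1 h2 h3
    have h4 : ∀ x : ℝ, b < -x ↔ x < -b := fun x => lt_neg
    simp only [h4] at h3 ⊢
    rw [← h2, ← h3, h1]
  have htwo : (volume {ω | b < |Y ω|}).toReal ≤ 2 * (volume {ω | b < Y ω}).toReal := by
    have h1 : volume {ω | b < |Y ω|} ≤ volume {ω | b < Y ω} + volume {ω | b < -Y ω} := by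
      refine (measure_mono ?_).trans (measure_union_le _ _)
      intro ω hω
      have hω' : b < |Y ω| := hω
      exact lt_abs.1 hω'
    rw [hneg] at h1
    have h2 := ENNReal.toReal_mono (by finiteness) h1
    rw [ENNReal.toReal_add (measure_ne_top _ _) (measure_ne_top _ _)] at h2
    linarith
  rw [← hb, Real.dist_eq, sub_zero, abs_of_nonneg (by positivity)]
  have := mul_le_mul_of_nonneg_left htwo hn0.le
  linarith
end
end
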